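/- For every η > 0 there exist c ∈ ℕ and κ > 0 such that the following holds. Let f : {0,1}^m → {0,1} be a non-constant monotone function, S ⊆ {0,1}^ℓ × 𝒪 a search problem, and gd : {0,1}^t × {0,1}^t → {0,1} a gadget with disc(gd) ≤ 2^{−η·t} and t ≥ c·log₂(m·ℓ). Fix any protocol Π solving mKW_f ⊛ (S◇gd). Then for every live transcript π₁ of Π, there exist at least 2^{κ·Q(S)·t} distinct suffixes π₂ such that the concatenation π₁∘π₂ is a full transcript (a leaf) of Π. -/

import Mathlib

open Classical

noncomputable section

/-! ### Deterministic communication protocols -/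

/-- A deterministic communication protocol: a finite binary protocol tree whose
leaves are labeled by outputs in `O`.  At a `nodeA` vertex Alice sends a bit
(computed from her input), at a `nodeB` vertex Bob sends a bit. -/
inductive Protocol (X Y O : Type) : Type where
  | leaf : O → Protocol X Y O
  | nodeA : (X → Bool) → Protocol X Y O → Protocol X Y O → Protocol X Y O
  | nodeB : (Y → Bool) → Protocol X Y O → Protocol X Y O → Protocol X Y O

namespace Protocol

variable {X Y O : Type}

/-- The output of the protocol on an input pair. -/
def run : Protocol X Y O → X → Y → O
  | leaf o, _, _ => o
  | nodeA h p0 p1, x, y => if h x then run p1 x y else run p0 x y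
  | nodeB h p0 p1, x, y => if h y then run p1 x y else run p0 x y

/-- Depth (communication complexity) of a protocol tree. -/
def depth : Protocol X Y O → ℕ
  | leaf _ => 0
  | nodeA _ p0 p1 => max (depth p0) (depth p1) + 1
  | nodeB _ p0 p1 => max (depth p0) (depth p1) + 1

/-- Number of leaves (protocol size). -/
def leaves : Protocol X Y O → ℕ
  | leaf _ => 1
  | nodeA _ p0 p1 => leaves p0 + leaves p1
  | nodeB _ p0 p1 => leaves p0 + leaves p1

/-- `followsA p π x` : Alice's input `x` is consistent with the partial transcript `π`,
i.e. `x` belongs to the Alice-side `𝒳_π` of the rectangle associated with the vertex `π`. -/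
def followsA : Protocol X Y O → List Bool → X → Prop
  | _, [], _ => True
  | leaf _, _ :: _, _ => False
  | nodeA h p0 p1, b :: rest, x =>
      h x = b ∧ (if b then followsA p1 rest x else followsA p0 rest x)
  | nodeB _ p0 p1, b :: rest, x =>
      if b then followsA p1 rest x else followsA p0 rest x

/-- `followsB p π y` : Bob's input `y` is consistent with the partial transcript `π`,
i.e. `y` belongs to the Bob-side `𝒴_π` of the rectangle associated with the vertex `π`. -/
def followsB : Protocol X Y O → List Bool → Y → Prop
  | _, [], _ => True
  | leaf _, _ :: _, _ => False
  | nodeA _ p0 p1, b :: rest, y =>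
      if b then followsB p1 rest y else followsB p0 rest y
  | nodeB h p0 p1, b :: rest, y =>
      h y = b ∧ (if b then followsB p1 rest y else followsB p0 rest y)

/-- The subtree of the protocol reached by following a partial transcript. -/
def subtree : Protocol X Y O → List Bool → Option (Protocol X Y O)
  | p, [] => some p
  | leaf _, _ :: _ => none
  | nodeA _ p0 p1, b :: rest => if b then subtree p1 rest else subtree p0 rest
  | nodeB _ p0 p1, b :: rest => if b then subtree p1 rest else subtree p0 rest

/-- `π` is a (partial or full) transcript of the protocol, i.e. a vertex of the protocol tree. -/
def IsTranscript (p : Protocol X Y O) (π : List Bool) : Prop :=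
  (subtree p π).isSome = true

/-- `π` is a full transcript of the protocol, i.e. a root-to-leaf path. -/
def IsFullTranscript (p : Protocol X Y O) (π : List Bool) : Prop :=
  ∃ o : O, subtree p π = some (leaf o)

end Protocol

/-- A protocol solves a communication problem `S` if on every input pair it
outputs a valid output. -/
def Solves {X Y O : Type} (p : Protocol X Y O) (S : X → Y → O → Prop) : Prop :=
  ∀ x y, S x y (p.run x y)

/-- `L(S)`: minimal number of leaves of a protocol solving `S`. -/
def Lsize {X Y O : Type} (S : X → Y → O → Prop) : ℕ :=
  sInf {k | ∃ p : Protocol X Y O, Solves p S ∧ p.leaves = k}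

/-- `CC(S)`: the deterministic communication complexity (minimal depth) of `S`. -/
def CC {X Y O : Type} (S : X → Y → O → Prop) : ℕ :=
  sInf {k | ∃ p : Protocol X Y O, Solves p S ∧ p.depth = k}

/-! ### Decision trees and query complexity -/

inductive DTree (ι O : Type) : Type where
  | leaf : O → DTree ι O
  | node : ι → DTree ι O → DTree ι O → DTree ι O

namespace DTree

variable {ι O : Type}

def run : DTree ι O → (ι → Bool) → O
  | leaf o, _ => o
  | node i t0 t1, z => if z i then run t1 z else run t0 z

def depth : DTree ι O → ℕ
  | leaf _ => 0
  | node _ t0 t1 => max (depth t0) (depth t1) + 1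

end DTree

def DSolves {ι O : Type} (T : DTree ι O) (S : (ι → Bool) → O → Prop) : Prop :=
  ∀ z, S z (T.run z)

/-- `Q(S)`: the deterministic query complexity of the search problem `S`. -/
def Qcomplexity {ι O : Type} (S : (ι → Bool) → O → Prop) : ℕ :=
  sInf {k | ∃ T : DTree ι O, DSolves T S ∧ T.depth = k}

/-! ### Monotone Karchmer–Wigderson relations -/

/-- The monotone KW relation of a rectangle `A × B`: find `i` with `x i > y i`. -/
def mKWrect {ι : Type} (A B : Set (ι → Bool)) : ↥A → ↥B → ι → Prop :=
  fun x y i => x.val i = true ∧ y.val i = false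

/-- `mL(A × B)`: the monotone formula complexity of the rectangle `A × B`. -/
def mL {ι : Type} (A B : Set (ι → Bool)) : ℕ := Lsize (mKWrect A B)

/-- The monotone KW relation of a monotone function `f`. -/
def mKW {ι : Type} (f : (ι → Bool) → Bool) :
    {x : ι → Bool // f x = true} → {y : ι → Bool // f y = false} → ι → Prop :=
  fun x y i => x.val i = true ∧ y.val i = false

/-! ### Lifted search problems, discrepancy, reductions -/

/-- The lifted search problem `S ◇ gd`. -/
def liftSP {ι Λ O : Type} (S : (ι → Bool) → O → Prop) (gd : Λ → Λ → Bool) :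
    (ι → Λ) → (ι → Λ) → O → Prop :=
  fun x y o => S (fun i => gd (x i) (y i)) o

/-- The discrepancy of a gadget `gd : {0,1}^t × {0,1}^t → {0,1}`. -/
def disc {t : ℕ} (gd : (Fin t → Bool) → (Fin t → Bool) → Bool) : ℝ :=
  sSup {r : ℝ | ∃ A B : Finset (Fin t → Bool),
    r = |((((A ×ˢ B).filter fun uv => gd uv.1 uv.2 = false).card : ℝ) -
          (((A ×ˢ B).filter fun uv => gd uv.1 uv.2 = true).card : ℝ))| /
        ((2 ^ t : ℝ) * (2 ^ t : ℝ))}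

/-- A (rectangular) reduction between communication problems. -/
def Reduces {X Y O X' Y' O' : Type}
    (S : X → Y → O → Prop) (S' : X' → Y' → O' → Prop) : Prop :=
  ∃ (RA : X → X') (RB : Y → Y') (Rout : O' → O),
    ∀ x y o', S' (RA x) (RB y) o' → S x y (Rout o')

/-- An injective reduction between communication problems. -/
def ReducesInj {X Y O X' Y' O' : Type}
    (S : X → Y → O → Prop) (S' : X' → Y' → O' → Prop) : Prop :=
  ∃ (RA : X → X') (RB : Y → Y') (Rout : O' → O),
    Function.Injective RA ∧ Function.Injective RB ∧
    ∀ x y o', S' (RA x) (RB y) o' → S x y (Rout o')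

/-! ### Compositions -/

/-- `mKW_f ◇ mKW_g := mKW_{f ◇ g}` : Alice gets `X ∈ (f◇g)⁻¹(1)`, Bob gets
`Y ∈ (f◇g)⁻¹(0)`, and they must find an entry `(i,j)` with `X i j > Y i j`. -/
def diamondKW {m : ℕ} {ι : Type} (f : (Fin m → Bool) → Bool) (g : (ι → Bool) → Bool) :
    {X : Fin m → ι → Bool // f (fun i => g (X i)) = true} →
    {Y : Fin m → ι → Bool // f (fun i => g (Y i)) = false} →
    (Fin m × ι) → Prop :=
  fun X Y e => X.val e.1 e.2 = true ∧ Y.val e.1 e.2 = false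

/-- `mKW_f ⊛ mKW_g` : same inputs as `mKW_f ◇ mKW_g`, but valid outputs are entries
`(i,j)` with `a_i > b_i` and `X i j > Y i j`, where `a_i = g(X_i)`, `b_i = g(Y_i)`. -/
def starKW {m : ℕ} {ι : Type} (f : (Fin m → Bool) → Bool) (g : (ι → Bool) → Bool) :
    {X : Fin m → ι → Bool // f (fun i => g (X i)) = true} →
    {Y : Fin m → ι → Bool // f (fun i => g (Y i)) = false} →
    (Fin m × ι) → Prop :=
  fun X Y e => g (X.val e.1) = true ∧ g (Y.val e.1) = false ∧
    X.val e.1 e.2 = true ∧ Y.val e.1 e.2 = false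

/-- `mKW_f ⊛ (S ◇ gd)` : Alice gets `X ∈ Λ^{m×ℓ}` and `a ∈ f⁻¹(1)`, Bob gets
`Y ∈ Λ^{m×ℓ}` and `b ∈ f⁻¹(0)`; valid outputs are pairs `(i,o)` with `a_i > b_i`
and `o` a valid output of `S ◇ gd` on the rows `(X_i, Y_i)`. -/
def starLift {m ℓ : ℕ} {Λ O : Type} (f : (Fin m → Bool) → Bool)
    (S : (Fin ℓ → Bool) → O → Prop) (gd : Λ → Λ → Bool) :
    ((Fin m → Fin ℓ → Λ) × {a : Fin m → Bool // f a = true}) →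
    ((Fin m → Fin ℓ → Λ) × {b : Fin m → Bool // f b = false}) →
    (Fin m × O) → Prop :=
  fun Xa Yb io =>
    Xa.2.val io.1 = true ∧ Yb.2.val io.1 = false ∧
      liftSP S gd (Xa.1 io.1) (Yb.1 io.1) io.2

/-! ### Live transcripts -/

/-- `𝒜_{π,W}` : the vectors `a ∈ f⁻¹(1)` such that `(W,a)` is consistent with `π`. -/
def Aset {m ℓ : ℕ} {Λ O : Type} (f : (Fin m → Bool) → Bool)
    (Pr : Protocol ((Fin m → Fin ℓ → Λ) × {a : Fin m → Bool // f a = true})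
                   ((Fin m → Fin ℓ → Λ) × {b : Fin m → Bool // f b = false}) (Fin m × O))
    (π : List Bool) (W : Fin m → Fin ℓ → Λ) : Set (Fin m → Bool) :=
  {a | ∃ h : f a = true, Protocol.followsA Pr π (W, ⟨a, h⟩)}

/-- `ℬ_{π,W}` : the vectors `b ∈ f⁻¹(0)` such that `(W,b)` is consistent with `π`. -/
def Bset {m ℓ : ℕ} {Λ O : Type} (f : (Fin m → Bool) → Bool)
    (Pr : Protocol ((Fin m → Fin ℓ → Λ) × {a : Fin m → Bool // f a = true})
                   ((Fin m → Fin ℓ → Λ) × {b : Fin m → Bool // f b = false}) (Fin m × O))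
    (π : List Bool) (W : Fin m → Fin ℓ → Λ) : Set (Fin m → Bool) :=
  {b | ∃ h : f b = false, Protocol.followsB Pr π (W, ⟨b, h⟩)}

/-- `γ(π)` : the average over uniform `W ∈ Λ^{m×ℓ}` of `mL(𝒜_{π,W} × ℬ_{π,W})`. -/
def gammaM {m ℓ : ℕ} {Λ O : Type} [Fintype Λ] [DecidableEq Λ] (f : (Fin m → Bool) → Bool)
    (Pr : Protocol ((Fin m → Fin ℓ → Λ) × {a : Fin m → Bool // f a = true})
                   ((Fin m → Fin ℓ → Λ) × {b : Fin m → Bool // f b = false}) (Fin m × O))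
    (π : List Bool) : ℝ :=
  (∑ W : Fin m → Fin ℓ → Λ, (mL (Aset f Pr π W) (Bset f Pr π W) : ℝ)) /
    (Fintype.card (Fin m → Fin ℓ → Λ) : ℝ)

/-- A transcript is live (alive) if it is a vertex of the protocol tree and `γ(π) ≥ 4m²`. -/
def LiveT {m ℓ : ℕ} {Λ O : Type} [Fintype Λ] [DecidableEq Λ] (f : (Fin m → Bool) → Bool)
    (Pr : Protocol ((Fin m → Fin ℓ → Λ) × {a : Fin m → Bool // f a = true})
                   ((Fin m → Fin ℓ → Λ) × {b : Fin m → Bool // f b = false}) (Fin m × O))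
    (π : List Bool) : Prop :=
  Protocol.IsTranscript Pr π ∧ 4 * (m : ℝ) ^ 2 ≤ gammaM f Pr π

/-! ### Average degree -/

/-- Projection of a set of strings to the coordinates in `J`. -/
def projSet {N Λ : Type} (W : Set (N → Λ)) (J : Set N) : Set (↥J → Λ) :=
  (fun w (j : ↥J) => w j.val) '' W

/-- Relative average degree: `rAvgDeg_I(W) = (|W| / |W|_{N−I}|) / |Λ|^{|I|}`. -/
def rAvgDeg {N Λ : Type} [Fintype Λ] (W : Set (N → Λ)) (I : Set N) : ℝ :=
  ((W.ncard : ℝ) / ((projSet W Iᶜ).ncard : ℝ)) / ((Fintype.card Λ : ℝ) ^ I.ncard)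

/-- View a set of `m × ℓ` matrices as a set of strings indexed by `Fin m × Fin ℓ`. -/
def matSet {m ℓ : ℕ} {Λ : Type} (WW : Set (Fin m → Fin ℓ → Λ)) : Set (Fin m × Fin ℓ → Λ) :=
  (fun W p => W p.1 p.2) '' WW

/-! ### Hard collections -/

/-- A transcript `π` supports the collection `(𝒲, a^W, b^W)` if for every `W ∈ 𝒲`,
`(W, a^W) ∈ 𝒳_π` and `(W, b^W) ∈ 𝒴_π`. -/
def SupportsCollection {m ℓ : ℕ} {Λ O : Type} (f : (Fin m → Bool) → Bool)
    (Pr : Protocol ((Fin m → Fin ℓ → Λ) × {a : Fin m → Bool // f a = true})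
                   ((Fin m → Fin ℓ → Λ) × {b : Fin m → Bool // f b = false}) (Fin m × O))
    (π : List Bool) (WW : Set (Fin m → Fin ℓ → Λ))
    (aW bW : (Fin m → Fin ℓ → Λ) → (Fin m → Bool)) : Prop :=
  ∀ W ∈ WW, aW W ∈ Aset f Pr π W ∧ bW W ∈ Bset f Pr π W

/-- The collection `(𝒲, a^W, b^W)` is hard: there is a set `R` of revealed rows such that
(i) every set `I` of unrevealed rows has relative average degree at least `4^{-|I|}` in the
restriction of `𝒲` to the unrevealed rows, and (ii) `a^W|_R ≤ b^{W'}|_R` for all `W, W' ∈ 𝒲`. -/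
def HardCollection {m ℓ : ℕ} {Λ : Type} [Fintype Λ] (f : (Fin m → Bool) → Bool)
    (WW : Set (Fin m → Fin ℓ → Λ))
    (aW bW : (Fin m → Fin ℓ → Λ) → (Fin m → Bool)) : Prop :=
  ∃ R : Set (Fin m),
    (∀ I : Set (Fin m), I ⊆ Rᶜ →
      ((1 : ℝ) / 4) ^ I.ncard ≤
        rAvgDeg (projSet (matSet WW) {p : Fin m × Fin ℓ | p.1 ∉ R})
          {q : ↥{p : Fin m × Fin ℓ | p.1 ∉ R} | q.val.1 ∈ I}) ∧
    (∀ W ∈ WW, ∀ W' ∈ WW, ∀ i ∈ R, aW W i ≤ bW W' i)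

/-! ### CNF formulas, Nullstellensatz degree -/

/-- A clause over `ℓ` variables: a set of literals; `(i, true)` is the positive
literal `x_i`, `(i, false)` is the negative literal `¬x_i`. -/
abbrev CnfClause (ℓ : ℕ) := Finset (Fin ℓ × Bool)

/-- An assignment satisfies a clause if some literal is satisfied. -/
def clauseSat {ℓ : ℕ} (z : Fin ℓ → Bool) (C : CnfClause ℓ) : Prop :=
  ∃ lit ∈ C, z lit.1 = lit.2

/-- The search problem `S_φ` : given an assignment, find a violated clause of `φ`. -/
def searchCNF {ℓ : ℕ} (φ : Finset (CnfClause ℓ)) :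
    (Fin ℓ → Bool) → CnfClause ℓ → Prop :=
  fun z C => C ∈ φ ∧ ¬ clauseSat z C

/-- The standard polynomial encoding of a clause. -/
def clausePoly {ℓ : ℕ} (C : CnfClause ℓ) : MvPolynomial (Fin ℓ) (ZMod 2) :=
  ∏ lit ∈ C, (if lit.2 then 1 - MvPolynomial.X lit.1 else MvPolynomial.X lit.1)

/-- The Nullstellensatz degree of a CNF contradiction `φ` over `F₂`. -/
def NSdeg {ℓ : ℕ} (φ : Finset (CnfClause ℓ)) : ℕ :=
  sInf {d : ℕ | ∃ (q : CnfClause ℓ → MvPolynomial (Fin ℓ) (ZMod 2))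
      (r : Fin ℓ → MvPolynomial (Fin ℓ) (ZMod 2)),
      ((∑ C ∈ φ, clausePoly C * q C) +
        ∑ i : Fin ℓ, (MvPolynomial.X i ^ 2 - MvPolynomial.X i) * r i) = 1 ∧
      (∀ C ∈ φ, (clausePoly C * q C).totalDegree ≤ d) ∧
      (∀ i : Fin ℓ, ((MvPolynomial.X i ^ 2 - MvPolynomial.X i) * r i).totalDegree ≤ d)}

/-- The equality gadget. -/
def eqGadget {Λ : Type} [DecidableEq Λ] : Λ → Λ → Bool := fun u v => decide (u = v)

/-! ### Semi-monotone composition -/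

/-- `U_m ◇ mKW_g` : Alice gets `X`, Bob gets `Y`; with `a_i = g(X_i)`, `b_i = g(Y_i)`,
valid outputs are entries `(i,j)` with (`a_i > b_i` and `X i j > Y i j`), or
(`a_i < b_i` and `X i j < Y i j`), or (`a_i = b_i` and `X i j ≠ Y i j`); if `a = b`
the players may output the failure symbol `⊥` (here `none`). -/
def semiU {m : ℕ} {ι : Type} (g : (ι → Bool) → Bool) :
    (Fin m → ι → Bool) → (Fin m → ι → Bool) → Option (Fin m × ι) → Prop :=
  fun X Y o =>
    match o with
    | none => ∀ i, g (X i) = g (Y i)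
    | some e =>
        (g (X e.1) = true ∧ g (Y e.1) = false ∧ X e.1 e.2 = true ∧ Y e.1 e.2 = false) ∨
        (g (X e.1) = false ∧ g (Y e.1) = true ∧ X e.1 e.2 = false ∧ Y e.1 e.2 = true) ∨
        (g (X e.1) = g (Y e.1) ∧ X e.1 e.2 ≠ Y e.1 e.2)

/-! ### Razborov rank measure over F₂ -/

/-- The maximal `F₂`-rank of the restriction of `A` to an `S`-monochromatic rectangle. -/
def monoMaxRank {X Y O : Type} [Fintype X] [Fintype Y]
    (S : X → Y → O → Prop) (A : Matrix X Y (ZMod 2)) : ℕ :=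
  sSup {r : ℕ | ∃ (U : Finset X) (V : Finset Y) (o : O),
    (∀ x ∈ U, ∀ y ∈ V, S x y o) ∧
    r = (A.submatrix (Subtype.val : {x // x ∈ U} → X)
          (Subtype.val : {y // y ∈ V} → Y)).rank}

/-- The Razborov rank measure `μ_{F₂}(S, A)`. -/
def muF2 {X Y O : Type} [Fintype X] [Fintype Y]
    (S : X → Y → O → Prop) (A : Matrix X Y (ZMod 2)) : ℝ :=
  (A.rank : ℝ) / (monoMaxRank S A : ℝ)

/-! ### Kronecker powers, pattern matrices -/

/-- The `m`-fold Kronecker power of a square matrix `B`, with index type `Fin m → ι`. -/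
def kronPow {ι R : Type} [CommMonoid R] (m : ℕ) (B : Matrix ι ι R) :
    Matrix (Fin m → ι) (Fin m → ι) R :=
  Matrix.of fun x y => ∏ i, B (x i) (y i)

/-- The pattern matrix `A_{x,y} = p(eq(x₁,y₁),…,eq(x_ℓ,y_ℓ))` of a multilinear
polynomial `p` with coefficients `phat` over `F₂`. -/
def patternMatrix {Λ : Type} [DecidableEq Λ] (ℓ : ℕ)
    (phat : Finset (Fin ℓ) → ZMod 2) : Matrix (Fin ℓ → Λ) (Fin ℓ → Λ) (ZMod 2) :=
  Matrix.of fun x y =>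
    ∑ T : Finset (Fin ℓ), phat T * ∏ i ∈ T, (if x i = y i then (1 : ZMod 2) else 0)

/-! ### s-t-connectivity -/

/-- The `s`-`t`-connectivity function: the input is the adjacency matrix of a directed
graph on `n` vertices, `s = 0`, `t = n-1`; output is whether `t` is reachable from `s`. -/
def stConn (n : ℕ) : ((Fin n × Fin n) → Bool) → Bool :=
  fun E =>
    if ∀ h : 0 < n,
        Relation.ReflTransGen (fun u v : Fin n => E (u, v) = true)
          ⟨0, h⟩ ⟨n - 1, Nat.sub_lt h Nat.one_pos⟩
      then true else false

/-! ### The matrix M of the semi-monotone composition theorem -/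

/-- The matrix `M` used in the semi-monotone composition theorem, built from a matrix
`A ∈ F₂^{𝒳×𝒴}` (with `𝒳 = range xs`, `𝒴 = range ys` identified with `Fin K` via the
left inverses `ix`, `iy`). -/
def semiM {m n K : ℕ} (g : (Fin n → Bool) → Bool) (xs ys : Fin K → (Fin n → Bool))
    (ix iy : (Fin n → Bool) → Fin K) (A : Matrix (Fin K) (Fin K) (ZMod 2)) :
    Matrix (Fin m → Fin n → Bool) (Fin m → Fin n → Bool) (ZMod 2) :=
  Matrix.of fun X Y =>
    if (fun i => g (X i)) = (fun i => g (Y i)) then 0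
    else ∏ i : Fin m,
      (if g (X i) = true ∧ g (Y i) = false then A (ix (X i)) (iy (Y i))
       else if g (X i) = false ∧ g (Y i) = true then A (ix (Y i)) (iy (X i))
       else if X i = Y i then 1 else 0)

end

/-! Let `q` be the subprotocol at `π₁`. Reveal the bits of some rows `(a, b)` and fix matrix entries
in revealed rows only, so as to maximize the average of `mL + 1`. Revealing a bit costs at most a
factor of two by subadditivity of `mL`, so by maximality no event that fixes `k` entries carries more
than a `(2 / |Λ|) ^ k` fraction of the average. Conditioning on `mL > 1` gives a distribution `μ` on
matrices under which `k` prescribed entries occur with probability at most `(4 / |Λ|) ^ k` and on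
which `q` solves `S ◇ gd` on an unrevealed row.

Now follow `q` downwards, keeping a rectangle `X × Y` on which few gadgets are fixed and whose sides
are spread on the remaining coordinates. A violation of spreadness is repaired by fixing the
offending coordinates on one side; low discrepancy ensures that the other side can be restricted to
make these gadgets output bits chosen by an adversary against decision trees of depth `Q(S)`. At a
leaf the adversary has been queried `Q(S)` times, and each query costs mass about `2 ^ (-ε t)` up to
constants; comparing with the masses of the two children at every vertex gives
`(2 ^ (ε t) / 32) ^ Q(S) ≤ leaves(q) ^ 14`. -/

/-! ### Protocol trees -/

namespace Protocol

variable {X Y X' Y' O : Type}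

/-- The protocol with the roles of the two players exchanged. -/
def swap : Protocol X Y O → Protocol Y X O
  | leaf o => leaf o
  | nodeA h p₀ p₁ => nodeB h p₀.swap p₁.swap
  | nodeB h p₀ p₁ => nodeA h p₀.swap p₁.swap

lemma leaves_swap (p : Protocol X Y O) : p.swap.leaves = p.leaves := by
  induction p with
  | leaf => rfl
  | nodeA _ _ _ ih₀ ih₁ | nodeB _ _ _ ih₀ ih₁ => simp only [swap, leaves, ih₀, ih₁]

lemma run_swap (p : Protocol X Y O) (x : X) (y : Y) : p.swap.run y x = p.run x y := by
  induction p with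
  | leaf => rfl
  | nodeA _ _ _ ih₀ ih₁ | nodeB _ _ _ ih₀ ih₁ => simp only [swap, run, ih₀, ih₁]

lemma swap_swap (p : Protocol X Y O) : p.swap.swap = p := by
  induction p with
  | leaf => rfl
  | nodeA _ _ _ ih₀ ih₁ | nodeB _ _ _ ih₀ ih₁ => simp only [swap, ih₀, ih₁]

lemma one_le_leaves (p : Protocol X Y O) : 1 ≤ p.leaves := by
  induction p with
  | leaf => exact le_rfl
  | nodeA _ _ _ ih₀ _ | nodeB _ _ _ ih₀ _ => exact ih₀.trans (Nat.le_add_right _ _)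

lemma eq_leaf_of_leaves_le_one (p : Protocol X Y O) (h : p.leaves ≤ 1) : ∃ o, p = leaf o := by
  cases p with
  | leaf o => exact ⟨o, rfl⟩
  | nodeA _ p₀ p₁ | nodeB _ p₀ p₁ =>
    have := p₀.one_le_leaves
    have := p₁.one_le_leaves
    simp only [leaves] at h
    omega

/-- `p.HasSplit T` says that `p` has a subprotocol `q` with more than `T / 2` and at most `T`
leaves, such that after one bit of each player that decides whether the run of `p` ends in `q`,
either `q` or the rest of `p` remains to be run. -/
def HasSplit (T : ℕ) (p : Protocol X Y O) : Prop :=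
  ∃ (α : X → Bool) (β : Y → Bool) (q r : Protocol X Y O),
    (∀ x y, p.run x y = if α x = true ∧ β y = true then q.run x y else r.run x y) ∧
      T < 2 * q.leaves ∧ q.leaves ≤ T ∧ q.leaves + r.leaves ≤ p.leaves

lemma HasSplit.congr {T : ℕ} {p p' : Protocol X Y O} (h : p.HasSplit T)
    (hrun : p'.run = p.run) (hleaves : p'.leaves = p.leaves) : p'.HasSplit T := by
  unfold HasSplit
  rwa [hrun, hleaves]

lemma HasSplit.swap {T : ℕ} {p : Protocol X Y O} (h : p.HasSplit T) : p.swap.HasSplit T := by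
  obtain ⟨α, β, q, r, hrun, hq⟩ := h
  refine ⟨β, α, q.swap, r.swap, fun y x => ?_, ?_⟩
  · simp only [run_swap, hrun, and_comm]
  · simpa only [leaves_swap] using hq

lemma HasSplit.nodeA_of_le {T : ℕ} {h : X → Bool} {p₀ p₁ : Protocol X Y O}
    (hle : p₀.leaves ≤ p₁.leaves) (hT : T < p₀.leaves + p₁.leaves)
    (ih : T < p₁.leaves → p₁.HasSplit T) : (nodeA h p₀ p₁).HasSplit T := by
  by_cases h₁ : T < p₁.leaves
  · obtain ⟨α, β, q, r, hrun, hlarge, hsmall, hsum⟩ := ih h₁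
    refine ⟨fun x => h x && α x, β, q, nodeA h p₀ r, fun x y => ?_, hlarge, hsmall, ?_⟩
    · simp only [run, hrun]
      rcases Bool.eq_false_or_eq_true (h x) with hx | hx <;> simp [hx]
    · simp only [leaves]
      omega
  · refine ⟨h, fun _ => true, p₁, p₀, fun x y => ?_, by omega, by omega, ?_⟩
    · simp only [run, and_true]
    · simp only [leaves]
      omega

lemma HasSplit.nodeA {T : ℕ} {h : X → Bool} {p₀ p₁ : Protocol X Y O}
    (hT : T < p₀.leaves + p₁.leaves) (ih₀ : T < p₀.leaves → p₀.HasSplit T)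
    (ih₁ : T < p₁.leaves → p₁.HasSplit T) : (nodeA h p₀ p₁).HasSplit T := by
  rcases le_total p₀.leaves p₁.leaves with hle | hle
  · exact HasSplit.nodeA_of_le hle hT ih₁
  · refine (HasSplit.nodeA_of_le (h := fun x => !h x) hle (by omega) ih₀).congr ?_ ?_
    · funext x y
      rcases Bool.eq_false_or_eq_true (h x) with hx | hx <;> simp [run, hx]
    · exact Nat.add_comm _ _

lemma hasSplit {T : ℕ} (hT : 1 ≤ T) (p : Protocol X Y O) (hp : T < p.leaves) : p.HasSplit T := by
  induction p with
  | leaf => exact absurd hp (Nat.not_lt.mpr hT)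
  | nodeA h p₀ p₁ ih₀ ih₁ => exact HasSplit.nodeA hp ih₀ ih₁
  | nodeB h p₀ p₁ ih₀ ih₁ =>
    rw [← swap_swap (nodeB h p₀ p₁)]
    refine (HasSplit.nodeA ?_ (fun hlt => (ih₀ ?_).swap) (fun hlt => (ih₁ ?_).swap)).swap
    · rwa [leaves_swap, leaves_swap]
    all_goals rwa [leaves_swap] at hlt

/-- The protocol on inputs in `X'` and `Y'` that runs `p` on their images under the partial maps
`e` and `e'`; inputs without an image answer every query with `false`. -/
def pullback (e : X' → Option X) (e' : Y' → Option Y) : Protocol X Y O → Protocol X' Y' O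
  | leaf o => leaf o
  | nodeA h p₀ p₁ =>
      nodeA (fun x => ((e x).map h).getD false) (p₀.pullback e e') (p₁.pullback e e')
  | nodeB h p₀ p₁ =>
      nodeB (fun y => ((e' y).map h).getD false) (p₀.pullback e e') (p₁.pullback e e')

lemma leaves_pullback (e : X' → Option X) (e' : Y' → Option Y) (p : Protocol X Y O) :
    (p.pullback e e').leaves = p.leaves := by
  induction p with
  | leaf => rfl
  | nodeA _ _ _ ih₀ ih₁ | nodeB _ _ _ ih₀ ih₁ => simp only [pullback, leaves, ih₀, ih₁]

lemma run_pullback {e : X' → Option X} {e' : Y' → Option Y} (p : Protocol X Y O)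
    {x' : X'} {y' : Y'} {x : X} {y : Y} (hx : e x' = some x) (hy : e' y' = some y) :
    (p.pullback e e').run x' y' = p.run x y := by
  induction p with
  | leaf => rfl
  | nodeA _ _ _ ih₀ ih₁ | nodeB _ _ _ ih₀ ih₁ =>
    simp only [pullback, run, ih₀, ih₁, hx, hy, Option.map_some, Option.getD_some]

lemma subtree_append {p q : Protocol X Y O} {π₁ : List Bool} (h : p.subtree π₁ = some q)
    (π₂ : List Bool) : p.subtree (π₁ ++ π₂) = q.subtree π₂ := by
  induction π₁ generalizing p with
  | nil =>
    obtain rfl : p = q := by simpa only [subtree, Option.some.injEq] using h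
    rfl
  | cons b π ih =>
    cases p with
    | leaf => simp only [subtree, reduceCtorEq] at h
    | nodeA | nodeB => cases b <;> exact ih h

lemma run_subtree {p q : Protocol X Y O} {π : List Bool} (h : p.subtree π = some q) {x : X} {y : Y}
    (hx : p.followsA π x) (hy : p.followsB π y) : q.run x y = p.run x y := by
  induction π generalizing p with
  | nil =>
    obtain rfl : p = q := by simpa only [subtree, Option.some.injEq] using h
    rfl
  | cons b π ih =>
    cases p with
    | leaf => simp only [subtree, reduceCtorEq] at h
    | nodeA =>
      simp only [run, hx.1]
      cases b <;> exact ih h hx.2 hy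
    | nodeB =>
      simp only [run, hy.1]
      cases b <;> exact ih h hx hy.2

/-- The root-to-leaf paths of a protocol. -/
def fullTranscripts : Protocol X Y O → Finset (List Bool)
  | leaf _ => {[]}
  | nodeA _ p₀ p₁ | nodeB _ p₀ p₁ =>
      p₀.fullTranscripts.image (List.cons false) ∪ p₁.fullTranscripts.image (List.cons true)

lemma card_fullTranscripts (p : Protocol X Y O) : p.fullTranscripts.card = p.leaves := by
  have card_image_union (s t : Finset (List Bool)) :
      (s.image (List.cons false) ∪ t.image (List.cons true)).card = s.card + t.card := by
    rw [Finset.card_union_of_disjoint, Finset.card_image_of_injective _ List.cons_injective,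
      Finset.card_image_of_injective _ List.cons_injective]
    simp only [Finset.disjoint_left, Finset.mem_image, not_exists, not_and]
    rintro _ ⟨π, _, rfl⟩ π' _ h
    cases h
  induction p with
  | leaf => rfl
  | nodeA _ _ _ ih₀ ih₁ | nodeB _ _ _ ih₀ ih₁ =>
    rw [fullTranscripts, card_image_union, ih₀, ih₁, leaves]

lemma isFullTranscript_of_mem_fullTranscripts {p : Protocol X Y O} {π : List Bool}
    (h : π ∈ p.fullTranscripts) : p.IsFullTranscript π := by
  induction p generalizing π with
  | leaf o =>
    obtain rfl := Finset.mem_singleton.mp h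
    exact ⟨o, rfl⟩
  | nodeA _ _ _ ih₀ ih₁ | nodeB _ _ _ ih₀ ih₁ =>
    simp only [fullTranscripts, Finset.mem_union, Finset.mem_image] at h
    obtain ⟨π, hπ, rfl⟩ | ⟨π, hπ, rfl⟩ := h
    · exact ih₀ hπ
    · exact ih₁ hπ

lemma exists_solves_of_forall [Finite X] [Nonempty O] {R : X → Y → O → Prop}
    (hR : ∀ x, ∃ q : Protocol X Y O, ∀ y, R x y (q.run x y)) : ∃ p, Solves p R := by
  have := Fintype.ofFinite X
  suffices ∀ s : Finset X, ∃ p : Protocol X Y O, ∀ x ∈ s, ∀ y, R x y (p.run x y) by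
    obtain ⟨p, hp⟩ := this Finset.univ
    exact ⟨p, fun x => hp x (Finset.mem_univ x)⟩
  intro s
  induction s using Finset.induction_on with
  | empty =>
    obtain ⟨o⟩ := ‹Nonempty O›
    exact ⟨leaf o, fun x hx => absurd hx (Finset.notMem_empty x)⟩
  | insert x₀ s _ ih =>
    obtain ⟨p, hp⟩ := ih
    obtain ⟨q, hq⟩ := hR x₀
    refine ⟨nodeA (fun x => decide (x = x₀)) p q, fun x hx y => ?_⟩
    by_cases hxx : x = x₀
    · subst hxx
      simpa only [run, decide_true, if_true] using hq y
    · simpa [run, hxx] using hp x ((Finset.mem_insert.mp hx).resolve_left hxx) y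

lemma exists_solves [Finite X] [Finite Y] [Nonempty O] {R : X → Y → O → Prop}
    (hR : ∀ x y, ∃ o, R x y o) : ∃ p, Solves p R := by
  refine exists_solves_of_forall fun x => ?_
  have announce_y (y : Y) : ∃ q : Protocol Y X O, ∀ x', R x y (q.run y x') := by
    obtain ⟨o, ho⟩ := hR x y
    exact ⟨leaf o, fun _ => ho⟩
  obtain ⟨p, hp⟩ := exists_solves_of_forall (R := fun y _ => R x y) announce_y
  exact ⟨p.swap, fun y => by rw [run_swap]; exact hp y x⟩

end Protocol

namespace MonotoneLifting

/-! ### Signs and the spectral bound -/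

section Spectral

variable {α β : Type*}

/-- The `±1` value `(-1)^b` of a bit. -/
def boolSign (b : Bool) : ℝ := if b then -1 else 1

lemma boolSign_mul_self (b : Bool) : boolSign b * boolSign b = 1 := by cases b <;> simp [boolSign]

lemma abs_boolSign (b : Bool) : |boolSign b| = 1 := by cases b <;> simp [boolSign]

lemma abs_prod_boolSign {κ : Type*} (K : Finset κ) (b : κ → Bool) :
    |∏ k ∈ K, boolSign (b k)| = 1 := by
  simp only [Finset.abs_prod, abs_boolSign, Finset.prod_const_one]

/-- The `±1` matrix of a gadget. -/
def signMatrix (gd : α → β → Bool) : Matrix α β ℝ := .of fun u v => boolSign (gd u v)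

/-- The `κ`-fold tensor power of a matrix, with rows and columns indexed by functions on `κ`. -/
def tensorPow (κ : Type*) [Fintype κ] (A : Matrix α β ℝ) : Matrix (κ → α) (κ → β) ℝ :=
  .of fun x y => ∏ k, A (x k) (y k)

/-- The squared spectral norm of `A` is at most `l`. -/
def SqNormLE [Fintype α] [Fintype β] (A : Matrix α β ℝ) (l : ℝ) : Prop :=
  ∀ q : β → ℝ, ∑ u, (A.mulVec q) u ^ 2 ≤ l * ∑ v, q v ^ 2

variable [Fintype α] [Fintype β] {A : Matrix α β ℝ} {l : ℝ}

lemma SqNormLE.transpose (hl : 0 ≤ l) (hA : SqNormLE A l) : SqNormLE A.transpose l := by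
  intro q
  set p := A.transpose.mulVec q with hp
  have pairing : ∑ v, p v ^ 2 = ∑ u, q u * (A.mulVec p) u := by
    simpa only [dotProduct, sq, hp, Matrix.mulVec_transpose]
      using (Matrix.dotProduct_mulVec q A p).symm
  have cauchy : (∑ v, p v ^ 2) ^ 2 ≤ (l * ∑ u, q u ^ 2) * ∑ v, p v ^ 2 := by
    calc (∑ v, p v ^ 2) ^ 2
        ≤ (∑ u, q u ^ 2) * ∑ u, (A.mulVec p) u ^ 2 := by
          rw [pairing]; exact Finset.sum_mul_sq_le_sq_mul_sq _ _ _
      _ ≤ (∑ u, q u ^ 2) * (l * ∑ v, p v ^ 2) := by gcongr; exact hA p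
      _ = (l * ∑ u, q u ^ 2) * ∑ v, p v ^ 2 := by ring
  rcases (Finset.sum_nonneg fun v _ => sq_nonneg (p v)).eq_or_lt with hzero | hpos
  · rw [← hzero]; positivity
  · exact le_of_mul_le_mul_right (by rwa [← sq]) hpos

lemma SqNormLE.tensorPow_of_equiv {κ κ' : Type*} [Fintype κ] [Fintype κ'] (e : κ ≃ κ') {l' : ℝ}
    (h : SqNormLE (tensorPow κ A) l') : SqNormLE (tensorPow κ' A) l' := by
  intro q
  let Eα : (κ → α) ≃ (κ' → α) := Equiv.arrowCongr e (Equiv.refl α)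
  let Eβ : (κ → β) ≃ (κ' → β) := Equiv.arrowCongr e (Equiv.refl β)
  have entry (x : κ → α) (y : κ → β) : tensorPow κ' A (Eα x) (Eβ y) = tensorPow κ A x y :=
    e.symm.prod_comp fun k => A (x k) (y k)
  have hq := h fun y => q (Eβ y)
  rw [Eβ.sum_comp fun y => q y ^ 2] at hq
  rw [← Eα.sum_comp]
  refine le_of_eq_of_le (Finset.sum_congr rfl fun x _ => ?_) hq
  simp only [Matrix.mulVec, dotProduct, ← Eβ.sum_comp, entry]

lemma sum_option_fun {κ γ : Type*} [Fintype κ] [DecidableEq κ] [Fintype γ]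
    (F : (Option κ → γ) → ℝ) :
    ∑ x, F x = ∑ a, ∑ w : κ → γ, F fun o => o.elim a w := by
  rw [← (Equiv.piOptionEquivProd (β := fun _ : Option κ => γ)).symm.sum_comp,
    Fintype.sum_prod_type]
  refine Finset.sum_congr rfl fun a _ => Finset.sum_congr rfl fun w _ => congrArg F ?_
  ext (_ | k) <;> rfl

lemma SqNormLE.tensorPow_option {κ : Type*} [Fintype κ] [DecidableEq κ] {l' : ℝ} (hl : 0 ≤ l)
    (hA : SqNormLE A l) (h : SqNormLE (tensorPow κ A) l') :
    SqNormLE (tensorPow (Option κ) A) (l * l') := by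
  intro q
  let inner (w : κ → α) (b : β) : ℝ :=
    (tensorPow κ A).mulVec (fun v => q fun o => o.elim b v) w
  have factor (a : α) (w : κ → α) :
      (tensorPow (Option κ) A).mulVec q (fun o => o.elim a w) = A.mulVec (inner w) a := by
    simp only [tensorPow, Matrix.of_apply, Matrix.mulVec, dotProduct, inner, sum_option_fun,
      Fintype.prod_option, Option.elim, Finset.mul_sum, mul_assoc]
  calc ∑ x, (tensorPow (Option κ) A).mulVec q x ^ 2
      = ∑ w, ∑ a, A.mulVec (inner w) a ^ 2 := by
        rw [sum_option_fun, Finset.sum_comm]; simp only [factor]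
    _ ≤ ∑ w, l * ∑ b, inner w b ^ 2 := Finset.sum_le_sum fun w _ => hA _
    _ = l * ∑ b, ∑ w, inner w b ^ 2 := by rw [← Finset.mul_sum, Finset.sum_comm]
    _ ≤ l * ∑ b, l' * ∑ v : κ → β, q (fun o => o.elim b v) ^ 2 := by gcongr with b; exact h _
    _ = l * l' * ∑ x, q x ^ 2 := by rw [sum_option_fun, ← Finset.mul_sum, mul_assoc]

lemma sqNormLE_tensorPow (hl : 0 ≤ l) (hA : SqNormLE A l) (κ : Type*) [Fintype κ]
    [DecidableEq κ] : SqNormLE (tensorPow κ A) (l ^ Fintype.card κ) := by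
  convert Fintype.induction_empty_option
    (P := fun κ _ => SqNormLE (tensorPow κ A) (l ^ Fintype.card κ)) ?_ ?_ ?_ κ
  · intro κ κ' _ e h
    let := Fintype.ofEquiv κ' e.symm
    rw [← Fintype.card_congr e]
    exact SqNormLE.tensorPow_of_equiv e h
  · intro q
    simp [tensorPow, Matrix.mulVec, dotProduct]
  · intro κ _ h
    rw [Fintype.card_option, pow_succ']
    convert SqNormLE.tensorPow_option hl hA h

lemma SqNormLE.of_gram (hl : 0 ≤ l)
    (h : ∑ p : β × β, (A.transpose * A) p.1 p.2 ^ 2 ≤ l ^ 2) : SqNormLE A l := by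
  intro q
  have quadratic : ∑ u, (A.mulVec q) u ^ 2 =
      ∑ p : β × β, (A.transpose * A) p.1 p.2 * (q p.1 * q p.2) := by
    simp only [Matrix.mulVec, dotProduct, Matrix.mul_apply, Matrix.transpose_apply,
      Finset.sum_mul, Fintype.sum_prod_type]
    simp only [sq, Finset.sum_mul_sum]
    rw [Finset.sum_comm]
    refine Finset.sum_congr rfl fun v _ => ?_
    rw [Finset.sum_comm]
    exact Finset.sum_congr rfl fun v' _ => Finset.sum_congr rfl fun u _ => by ring
  have norm_tensor : ∑ p : β × β, (q p.1 * q p.2) ^ 2 = (∑ v, q v ^ 2) ^ 2 := by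
    simp only [sq (∑ v, q v ^ 2), Finset.sum_mul_sum, Fintype.sum_prod_type, mul_pow]
  have squared : (∑ u, (A.mulVec q) u ^ 2) ^ 2 ≤ (l * ∑ v, q v ^ 2) ^ 2 := by
    rw [quadratic, mul_pow, ← norm_tensor]
    exact (Finset.sum_mul_sq_le_sq_mul_sq _ _ _).trans (by gcongr)
  exact le_of_sq_le_sq squared (by positivity)

lemma sum_gram_sq (A : Matrix α β ℝ) :
    ∑ p : β × β, (A.transpose * A) p.1 p.2 ^ 2 =
      ∑ r : α × β, A r.1 r.2 * ∑ u, ∑ v, A u v * A u r.2 * A r.1 v := by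
  have expand (p : β × β) : (A.transpose * A) p.1 p.2 ^ 2 =
      ∑ s : α × α, A s.1 p.1 * A s.1 p.2 * (A s.2 p.1 * A s.2 p.2) := by
    simp only [Matrix.mul_apply, Matrix.transpose_apply, sq, Finset.sum_mul_sum,
      Fintype.sum_prod_type]
  simp only [expand, ← Fintype.sum_prod_type', Finset.mul_sum]
  exact Fintype.sum_equiv
    { toFun x := ((x.2.2, x.1.2), (x.2.1, x.1.1))
      invFun x := ((x.2.2, x.1.2), (x.2.1, x.1.1)) } _ _ fun x => by dsimp; ring

lemma abs_sum_mul_boolSign_le {M : Matrix α β ℝ} {d : ℝ}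
    (cut : ∀ (U : Finset α) (V : Finset β), |∑ u ∈ U, ∑ v ∈ V, M u v| ≤ d)
    (φ : α → Bool) (ψ : β → Bool) :
    |∑ u, ∑ v, M u v * boolSign (φ u) * boolSign (ψ v)| ≤ 4 * d := by
  have split (u : α) (v : β) : M u v * boolSign (φ u) * boolSign (ψ v) =
      ∑ b : Bool × Bool, boolSign b.1 * boolSign b.2 *
        if φ u = b.1 then if ψ v = b.2 then M u v else 0 else 0 := by
    rw [Fintype.sum_prod_type]
    cases φ u <;> cases ψ v <;> simp [boolSign]
  have regroup : ∑ u, ∑ v, M u v * boolSign (φ u) * boolSign (ψ v) =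
      ∑ b : Bool × Bool, boolSign b.1 * boolSign b.2 *
        ∑ u with φ u = b.1, ∑ v with ψ v = b.2, M u v := by
    simp only [split, Finset.sum_comm (t := (Finset.univ : Finset (Bool × Bool)))]
    refine Finset.sum_congr rfl fun b _ => ?_
    simp only [Finset.sum_filter, Finset.mul_sum]
    refine Finset.sum_congr rfl fun u _ => ?_
    split_ifs <;> simp only [Finset.mul_sum, mul_zero, Finset.sum_const_zero]
  rw [regroup]
  refine (Finset.abs_sum_le_sum_abs _ _).trans ?_
  calc ∑ b : Bool × Bool, |boolSign b.1 * boolSign b.2 *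
        ∑ u with φ u = b.1, ∑ v with ψ v = b.2, M u v|
      ≤ ∑ _b : Bool × Bool, d := Finset.sum_le_sum fun b _ => by
        simpa only [abs_mul, abs_boolSign, one_mul] using cut _ _
    _ = 4 * d := by simp

lemma SqNormLE.of_cut_bound {gd : α → β → Bool} {d : ℝ}
    (cut : ∀ (U : Finset α) (V : Finset β), |∑ u ∈ U, ∑ v ∈ V, signMatrix gd u v| ≤ d)
    (hl : 0 ≤ l) (hd : Fintype.card α * Fintype.card β * (4 * d) ≤ l ^ 2) :
    SqNormLE (signMatrix gd) l := by
  refine SqNormLE.of_gram hl (le_trans ?_ hd)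
  rw [sum_gram_sq]
  calc _ ≤ ∑ _r : α × β, 4 * d := Finset.sum_le_sum fun r _ => by
        refine (le_abs_self _).trans ?_
        rw [abs_mul, signMatrix, Matrix.of_apply, abs_boolSign, one_mul]
        exact abs_sum_mul_boolSign_le cut (fun u => gd u r.2) (fun v => gd r.1 v)
    _ = _ := by simp

end Spectral

section Discrepancy

variable {t : ℕ} (gd : (Fin t → Bool) → (Fin t → Bool) → Bool)

lemma abs_sum_signMatrix_le_disc (U V : Finset (Fin t → Bool)) :
    |∑ u ∈ U, ∑ v ∈ V, signMatrix gd u v| ≤ disc gd * ((2 : ℝ) ^ t * 2 ^ t) := by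
  rw [← div_le_iff₀ (by positivity)]
  refine le_csSup ?_ ⟨U, V, ?_⟩
  · refine (Set.finite_range fun p : Finset (Fin t → Bool) × Finset (Fin t → Bool) =>
      |((((p.1 ×ˢ p.2).filter fun uv => gd uv.1 uv.2 = false).card : ℝ) -
        (((p.1 ×ˢ p.2).filter fun uv => gd uv.1 uv.2 = true).card : ℝ))| /
        ((2 ^ t : ℝ) * (2 ^ t : ℝ))).bddAbove.mono ?_
    rintro r ⟨U, V, rfl⟩
    exact ⟨(U, V), rfl⟩
  · congr 2
    change ∑ u ∈ U, ∑ v ∈ V, boolSign (gd u v) = _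
    rw [← Finset.sum_product', Finset.card_filter, Finset.card_filter]
    push_cast
    rw [← Finset.sum_sub_distrib]
    refine Finset.sum_congr rfl fun p _ => ?_
    cases gd p.1 p.2 <;> simp [boolSign]

lemma SqNormLE.of_disc_le {B : ℝ} (hB : 0 < B) (h : disc gd ≤ 1 / B ^ 64) :
    SqNormLE (signMatrix gd) (2 * (Fintype.card (Fin t → Bool) : ℝ) ^ 2 / B ^ 32) := by
  refine SqNormLE.of_cut_bound (abs_sum_signMatrix_le_disc gd) (by positivity) ?_
  simp only [Fintype.card_pi, Fintype.card_bool, Finset.prod_const, Finset.card_univ,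
    Fintype.card_fin, Nat.cast_pow, Nat.cast_ofNat]
  calc (2 : ℝ) ^ t * 2 ^ t * (4 * (disc gd * (2 ^ t * 2 ^ t)))
      ≤ 2 ^ t * 2 ^ t * (4 * (1 / B ^ 64 * (2 ^ t * 2 ^ t))) := by gcongr
    _ = (2 * ((2 : ℝ) ^ t) ^ 2 / B ^ 32) ^ 2 := by field_simp; ring

end Discrepancy

/-! ### Cylinders and spread sets -/

section Spread

variable {ι Λ : Type*} {μ : (ι → Λ) → ℝ} {X Y : Finset (ι → Λ)} {F I J K : Finset ι} {ω : ℝ}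

/-- The mass of a finite set under a weight function. -/
def mass {α : Type*} (μ : α → ℝ) (X : Finset α) : ℝ := ∑ x ∈ X, μ x

lemma mass_nonneg {α : Type*} {μ : α → ℝ} (hμ : 0 ≤ μ) (X : Finset α) : 0 ≤ mass μ X :=
  Finset.sum_nonneg fun x _ => hμ x

lemma mass_mono {α : Type*} {μ : α → ℝ} (hμ : 0 ≤ μ) {X Y : Finset α} (h : X ⊆ Y) :
    mass μ X ≤ mass μ Y :=
  Finset.sum_le_sum_of_subset_of_nonneg h fun x _ _ => hμ x

lemma nonempty_of_mass_pos {α : Type*} {μ : α → ℝ} {X : Finset α} (h : 0 < mass μ X) :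
    X.Nonempty :=
  Finset.nonempty_of_sum_ne_zero h.ne'

/-- The members of `X` whose restriction to the coordinates in `J` is `w`. -/
noncomputable def cylinder (X : Finset (ι → Λ)) (J : Finset ι) (w : J → Λ) : Finset (ι → Λ) :=
  {x ∈ X | J.restrict x = w}

/-- No cylinder of `X` on coordinates `J ⊆ F` has relative mass above `ω ^ |J|`. -/
def IsSpread (μ : (ι → Λ) → ℝ) (ω : ℝ) (F : Finset ι) (X : Finset (ι → Λ)) : Prop :=
  ∀ J ⊆ F, ∀ w : J → Λ, mass μ (cylinder X J w) ≤ ω ^ J.card * mass μ X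

lemma mem_cylinder {w : J → Λ} {x : ι → Λ} : x ∈ cylinder X J w ↔ x ∈ X ∧ J.restrict x = w :=
  Finset.mem_filter

lemma mem_cylinder_restrict {u x : ι → Λ} :
    x ∈ cylinder X J (J.restrict u) ↔ x ∈ X ∧ ∀ j ∈ J, x j = u j := by
  simp only [mem_cylinder, funext_iff, Finset.restrict, Subtype.forall]

lemma cylinder_subset (X : Finset (ι → Λ)) (J : Finset ι) (w : J → Λ) : cylinder X J w ⊆ X :=
  Finset.filter_subset _ _

lemma cylinder_empty (X : Finset (ι → Λ)) (w : (∅ : Finset ι) → Λ) : cylinder X ∅ w = X :=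
  Finset.filter_true_of_mem fun _ _ => Subsingleton.elim _ _

lemma cylinder_cylinder [DecidableEq ι] (X : Finset (ι → Λ)) (I J : Finset ι) (u : ι → Λ) :
    cylinder (cylinder X I (I.restrict u)) J (J.restrict u) =
      cylinder X (I ∪ J) ((I ∪ J).restrict u) := by
  ext x
  simp only [mem_cylinder_restrict, Finset.forall_mem_union, and_assoc]

lemma sum_mass_cylinder [DecidableEq ι] [Fintype Λ] (μ : (ι → Λ) → ℝ) (X : Finset (ι → Λ))
    (J : Finset ι) : ∑ w, mass μ (cylinder X J w) = mass μ X :=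
  Finset.sum_fiberwise X J.restrict μ

lemma IsSpread.mono_rate (hμ : 0 ≤ μ) {ω' : ℝ} (hω : 0 ≤ ω) (hle : ω ≤ ω')
    (h : IsSpread μ ω F X) : IsSpread μ ω' F X := fun J hJ w =>
  (h J hJ w).trans (by gcongr; exact mass_nonneg hμ X)

lemma IsSpread.mono_set (h : IsSpread μ ω F X) (hJ : J ⊆ F) : IsSpread μ ω J X :=
  fun K hK => h K (hK.trans hJ)

lemma IsSpread.sum_mul_restrict_le [DecidableEq ι] [Fintype Λ] (hX : IsSpread μ ω K X)
    {b : (K → Λ) → ℝ} (hb : 0 ≤ b) :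
    ∑ x ∈ X, μ x * b (K.restrict x) ≤ ω ^ K.card * mass μ X * ∑ w, b w := by
  rw [← Finset.sum_fiberwise X K.restrict, Finset.mul_sum]
  refine Finset.sum_le_sum fun w _ => ?_
  calc ∑ x ∈ X with K.restrict x = w, μ x * b (K.restrict x)
      = mass μ (cylinder X K w) * b w := by
        rw [mass, cylinder, Finset.sum_mul]
        exact Finset.sum_congr rfl fun x hx => by rw [(Finset.mem_filter.mp hx).2]
    _ ≤ ω ^ K.card * mass μ X * b w :=
        mul_le_mul_of_nonneg_right (hX K subset_rfl w) (hb w)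

lemma IsSpread.mass_cylinder_cylinder_le (hμ : 0 ≤ μ) (hω : 0 ≤ ω)
    (hX : IsSpread μ ω F X) (hJ : J ⊆ F) (hK : K ⊆ F) (hJK : Disjoint J K) (v : J → Λ)
    (w : K → Λ) :
    mass μ (cylinder (cylinder X J v) K w) ≤ ω ^ (J.card + K.card) * mass μ X := by
  rcases (cylinder (cylinder X J v) K w).eq_empty_or_nonempty with hempty | ⟨x, hx⟩
  · rw [hempty, mass, Finset.sum_empty]
    exact mul_nonneg (pow_nonneg hω _) (mass_nonneg hμ X)
  · simp only [mem_cylinder] at hx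
    rw [← hx.1.2, ← hx.2, cylinder_cylinder, ← Finset.card_union_of_disjoint hJK]
    exact hX _ (Finset.union_subset hJ hK) _

lemma exists_max_heavy_cylinder (μ : (ι → Λ) → ℝ) (ω : ℝ) (F : Finset ι) (hX : X.Nonempty) :
    ∃ I ⊆ F, ∃ u ∈ X, ω ^ I.card * mass μ X ≤ mass μ (cylinder X I (I.restrict u)) ∧
      ∀ J ⊆ F, ∀ v ∈ X, ω ^ J.card * mass μ X ≤ mass μ (cylinder X J (J.restrict v)) →
        J.card ≤ I.card := by
  let heavy : Finset (Finset ι) := {I ∈ F.powerset | ∃ u ∈ X,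
    ω ^ I.card * mass μ X ≤ mass μ (cylinder X I (I.restrict u))}
  have heavy_nonempty : heavy.Nonempty := by
    obtain ⟨u, hu⟩ := hX
    exact ⟨∅, Finset.mem_filter.mpr ⟨Finset.empty_mem_powerset F, u, hu, by
      rw [cylinder_empty, Finset.card_empty, pow_zero, one_mul]⟩⟩
  obtain ⟨I, hI, hmax⟩ := heavy.exists_max_image Finset.card heavy_nonempty
  obtain ⟨hIF, u, hu, hmass⟩ := Finset.mem_filter.mp hI
  exact ⟨I, Finset.mem_powerset.mp hIF, u, hu, hmass, fun J hJ v hv hvJ =>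
    hmax J (Finset.mem_filter.mpr ⟨Finset.mem_powerset.mpr hJ, v, hv, hvJ⟩)⟩

lemma exists_spread_cylinder [DecidableEq ι] (hμ : 0 ≤ μ) (hω : 0 ≤ ω) (F : Finset ι)
    (hX : X.Nonempty) :
    ∃ I ⊆ F, ∃ u ∈ X, ω ^ I.card * mass μ X ≤ mass μ (cylinder X I (I.restrict u)) ∧
      IsSpread μ ω (F \ I) (cylinder X I (I.restrict u)) := by
  obtain ⟨I, hIF, u, hu, hmass, hmax⟩ := exists_max_heavy_cylinder μ ω F hX
  refine ⟨I, hIF, u, hu, hmass, fun J hJ w => ?_⟩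
  by_contra! hlarge
  obtain ⟨v, hv⟩ := nonempty_of_mass_pos
    ((mul_nonneg (pow_nonneg hω _) (mass_nonneg hμ _)).trans_lt hlarge)
  obtain ⟨hvI, rfl⟩ := mem_cylinder.mp hv
  obtain ⟨hvX, hvu⟩ := mem_cylinder.mp hvI
  rw [← hvu] at hmass hlarge
  have hIJ : Disjoint I J :=
    Finset.disjoint_left.mpr fun i hi hiJ => (Finset.mem_sdiff.mp (hJ hiJ)).2 hi
  have union_heavy :
      ω ^ (I ∪ J).card * mass μ X ≤ mass μ (cylinder X (I ∪ J) ((I ∪ J).restrict v)) := by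
    calc ω ^ (I ∪ J).card * mass μ X = ω ^ J.card * (ω ^ I.card * mass μ X) := by
          rw [Finset.card_union_of_disjoint hIJ, pow_add]; ring
      _ ≤ ω ^ J.card * mass μ (cylinder X I (I.restrict v)) := by gcongr
      _ ≤ mass μ (cylinder X (I ∪ J) ((I ∪ J).restrict v)) := by
          rw [← cylinder_cylinder]; exact hlarge.le
  have hJ_empty : J = ∅ := by
    have := hmax _ (Finset.union_subset hIF (hJ.trans Finset.sdiff_subset)) v hvX union_heavy
    rw [Finset.card_union_of_disjoint hIJ] at this
    exact Finset.card_eq_zero.mp (by lia)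
  subst hJ_empty
  rw [cylinder_empty, Finset.card_empty, pow_zero, one_mul] at hlarge
  exact hlarge.false

end Spread

/-! ### Biases of parities -/

section Bias

variable {ι Λ : Type*} {μ : (ι → Λ) → ℝ} {gd : Λ → Λ → Bool} {X Y : Finset (ι → Λ)}
  {F J K : Finset ι} {ω l : ℝ}

/-- The `μ`-correlation on `Y` of the parity over `k ∈ K` of the gadget values on `(x k, y k)`:
the Fourier coefficient at `K` of the distribution of gadget values. -/
def bias (μ : (ι → Λ) → ℝ) (gd : Λ → Λ → Bool) (Y : Finset (ι → Λ)) (K : Finset ι)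
    (x : ι → Λ) : ℝ :=
  ∑ y ∈ Y, μ y * ∏ k ∈ K, boolSign (gd (x k) (y k))

lemma bias_empty (μ : (ι → Λ) → ℝ) (gd : Λ → Λ → Bool) (Y : Finset (ι → Λ)) (x : ι → Λ) :
    bias μ gd Y ∅ x = mass μ Y := by
  simp only [bias, Finset.prod_empty, mul_one, mass]

lemma abs_bias_le (hμ : 0 ≤ μ) (gd : Λ → Λ → Bool) (Y : Finset (ι → Λ)) (K : Finset ι)
    (x : ι → Λ) : |bias μ gd Y K x| ≤ mass μ Y := by
  refine (Finset.abs_sum_le_sum_abs _ _).trans (Finset.sum_le_sum fun y _ => ?_)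
  rw [abs_mul, abs_prod_boolSign, mul_one, abs_of_nonneg (hμ y)]

variable [Fintype Λ]

lemma bias_eq_mulVec [DecidableEq ι] (μ : (ι → Λ) → ℝ) (gd : Λ → Λ → Bool) (Y : Finset (ι → Λ))
    (K : Finset ι) (x : ι → Λ) :
    bias μ gd Y K x = (tensorPow K (signMatrix gd)).mulVec (fun w => mass μ (cylinder Y K w))
      (K.restrict x) := by
  rw [bias, ← Finset.sum_fiberwise Y K.restrict]
  refine Finset.sum_congr rfl fun w _ => ?_
  simp only [mass, cylinder, Finset.mul_sum]
  refine Finset.sum_congr rfl fun y hy => ?_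
  rw [← (Finset.mem_filter.mp hy).2, mul_comm, ← Finset.prod_coe_sort K]
  rfl

lemma sum_sq_mass_cylinder_le [DecidableEq ι] (hμ : 0 ≤ μ) (hω : 0 ≤ ω) (hY : IsSpread μ ω F Y)
    (hJ : J ⊆ F) (hK : K ⊆ F) (hJK : Disjoint J K) :
    ∑ v, ∑ w, mass μ (cylinder (cylinder Y J v) K w) ^ 2 ≤
      ω ^ (J.card + K.card) * mass μ Y ^ 2 := by
  calc ∑ v, ∑ w, mass μ (cylinder (cylinder Y J v) K w) ^ 2
      ≤ ∑ v, ∑ w, ω ^ (J.card + K.card) * mass μ Y * mass μ (cylinder (cylinder Y J v) K w) := by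
        simp only [sq]
        gcongr with v _ w
        · exact mass_nonneg hμ _
        · exact hY.mass_cylinder_cylinder_le hμ hω hJ hK hJK v w
    _ = ω ^ (J.card + K.card) * mass μ Y ^ 2 := by
        simp only [← Finset.mul_sum, sum_mass_cylinder, mul_assoc, sq]

lemma sum_bias_sq_le [DecidableEq ι] (hμ : 0 ≤ μ) (hω : 0 ≤ ω) (hl : 0 ≤ l)
    (hgd : SqNormLE (signMatrix gd) l) (hJ : J ⊆ F) (hK : K ⊆ F) (hJK : Disjoint J K)
    (hX : IsSpread μ ω F X) (hY : IsSpread μ ω F Y) :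
    ∑ x ∈ X, μ x * ∑ v, bias μ gd (cylinder Y J v) K x ^ 2 ≤
      (ω ^ 2 * l) ^ K.card * ω ^ J.card * mass μ X * mass μ Y ^ 2 := by
  let b (v : J → Λ) : (K → Λ) → ℝ :=
    (tensorPow K (signMatrix gd)).mulVec fun w => mass μ (cylinder (cylinder Y J v) K w)
  have hb (v : J → Λ) : ∑ w, b v w ^ 2 ≤
      l ^ K.card * ∑ w, mass μ (cylinder (cylinder Y J v) K w) ^ 2 := by
    simpa only [Fintype.card_coe] using sqNormLE_tensorPow hl hgd K _
  calc ∑ x ∈ X, μ x * ∑ v, bias μ gd (cylinder Y J v) K x ^ 2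
      = ∑ x ∈ X, μ x * ∑ v, b v (K.restrict x) ^ 2 := by simp only [bias_eq_mulVec, b]
    _ ≤ ω ^ K.card * mass μ X * ∑ w, ∑ v, b v w ^ 2 :=
        (hX.mono_set hK).sum_mul_restrict_le (b := fun w => ∑ v, b v w ^ 2)
          fun w => Finset.sum_nonneg fun v _ => sq_nonneg _
    _ ≤ ω ^ K.card * mass μ X * ∑ v, l ^ K.card *
          ∑ w, mass μ (cylinder (cylinder Y J v) K w) ^ 2 := by
        rw [Finset.sum_comm]
        have := mass_nonneg hμ X
        gcongr with v
        exact hb v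
    _ ≤ ω ^ K.card * mass μ X * (l ^ K.card * (ω ^ (J.card + K.card) * mass μ Y ^ 2)) := by
        rw [← Finset.mul_sum]
        have := mass_nonneg hμ X
        gcongr
        exact sum_sq_mass_cylinder_le hμ hω hY hJ hK hJK
    _ = (ω ^ 2 * l) ^ K.card * ω ^ J.card * mass μ X * mass μ Y ^ 2 := by
        rw [pow_add, mul_pow, ← pow_mul, mul_comm 2, pow_mul]; ring

end Bias

/-! ### Unbiased inputs and gadget events -/

/-- The numerical conditions of the simulation, for `n` coordinates over an alphabet of size `N`.
The rates `B ^ 2 / N` and `B / N` are the ones at which sets are kept spread before and after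
conditioning on gadget values, and `1 / B` is the bias tolerated per coordinate. -/
structure Parameters (n C : ℕ) (N B : ℝ) : Prop where
  N_pos : 0 < N
  le_B : 1024 ≤ B
  mul_le_B : 128 * n ≤ B
  pow_le_B : 8 * (16 * n : ℝ) ^ C ≤ B
  mul_le_pow : B * N ≤ (B ^ 2) ^ C

section Parameters

variable {n C : ℕ} {N B : ℝ}

lemma Parameters.B_pos (P : Parameters n C N B) : 0 < B := by linarith [P.le_B]

lemma Parameters.weak_rate_pos (P : Parameters n C N B) : 0 < B ^ 2 / N :=
  div_pos (pow_pos P.B_pos 2) P.N_pos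

lemma Parameters.strong_rate_pos (P : Parameters n C N B) : 0 < B / N :=
  div_pos P.B_pos P.N_pos

lemma Parameters.two_mul_strong_rate_le (P : Parameters n C N B) : 2 * (B / N) ≤ B ^ 2 / N := by
  have := P.N_pos
  rw [← mul_div_assoc]
  gcongr
  nlinarith [P.le_B]

lemma Parameters.strong_rate_le (P : Parameters n C N B) : B / N ≤ B ^ 2 / N := by
  linarith [P.two_mul_strong_rate_le, P.strong_rate_pos]

lemma Parameters.strong_rate_mul_pow_le (P : Parameters n C N B) :
    B / N * (16 * n : ℝ) ^ C ≤ 1 / 8 * (B ^ 2 / N) := by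
  have hN := P.N_pos
  have hB := P.B_pos
  have hpow := P.pow_le_B
  calc B / N * (16 * n : ℝ) ^ C ≤ B / N * (B / 8) := by gcongr; linarith
    _ = 1 / 8 * (B ^ 2 / N) := by ring

/-- Up to the factor `2 / B ^ 22`, the square of a bias exceeds its tolerated value by
`1 / (B ^ 2 / N)` per fixed coordinate, which is paid for by `C` parity coordinates. -/
lemma Parameters.moment_le (P : Parameters n C N B) {j k : ℕ} (h : C * j ≤ k) :
    ((B ^ 2 / N) ^ 2 * (2 * N ^ 2 / B ^ 32) / (1 / B) ^ 2) ^ k * (1 / (B ^ 2 / N)) ^ j ≤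
      (1 / B) ^ k * (1 / B) ^ j := by
  have hN := P.N_pos
  have hB := P.B_pos
  have hB1 : 1 ≤ B := by linarith [P.le_B]
  have fixed_le : (1 / (B ^ 2 / N)) ^ j ≤ (B ^ 2) ^ k * (1 / B) ^ j :=
    calc (1 / (B ^ 2 / N)) ^ j = (N * B * (1 / B ^ 3)) ^ j := by congr 1; field_simp
      _ ≤ ((B ^ 2) ^ C * (1 / B)) ^ j := by
        gcongr
        · rw [mul_comm]; exact P.mul_le_pow
        · exact le_self_pow₀ hB1 (by norm_num)
      _ = (B ^ 2) ^ (C * j) * (1 / B) ^ j := by rw [mul_pow, pow_mul]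
      _ ≤ (B ^ 2) ^ k * (1 / B) ^ j := by
        gcongr
        exact one_le_pow₀ hB1
  calc ((B ^ 2 / N) ^ 2 * (2 * N ^ 2 / B ^ 32) / (1 / B) ^ 2) ^ k * (1 / (B ^ 2 / N)) ^ j
      ≤ (2 / B ^ 26) ^ k * ((B ^ 2) ^ k * (1 / B) ^ j) := by
        have : (B ^ 2 / N) ^ 2 * (2 * N ^ 2 / B ^ 32) / (1 / B) ^ 2 = 2 / B ^ 26 := by field_simp
        rw [this]
        gcongr
    _ = (2 / B ^ 23 * (1 / B)) ^ k * (1 / B) ^ j := by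
        rw [← mul_assoc, ← mul_pow]; congr 2; field_simp
    _ ≤ (1 / B) ^ k * (1 / B) ^ j := by
        gcongr
        refine mul_le_of_le_one_left (by positivity) ?_
        rw [div_le_one (by positivity)]
        exact le_trans (by linarith [P.le_B]) (le_self_pow₀ hB1 (by norm_num))

lemma Parameters.sixteen_mul_le (P : Parameters n C N B) :
    16 * n * (1 / B) ≤ 1 := by
  rw [mul_one_div, div_le_one P.B_pos]
  linarith [P.mul_le_B, (Nat.cast_nonneg n : (0 : ℝ) ≤ n)]

lemma Parameters.of_pow_le {t : ℕ} {ε : ℝ} (hn : 2 ≤ n) (hε : ε ≤ 1) (hC : 1 ≤ ε * C)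
    (h : (n : ℝ) ^ (5 * C + 10) ≤ 2 ^ (ε * t)) : Parameters n C (2 ^ t) (2 ^ (ε * t)) := by
  have hn2 : (2 : ℝ) ≤ n := by exact_mod_cast hn
  have hn1 : (1 : ℝ) ≤ n := by linarith
  have sixteen_le : 16 * (n : ℝ) ≤ n ^ 5 :=
    calc 16 * (n : ℝ) = 2 ^ 4 * n := by norm_num
      _ ≤ n ^ 4 * n := by gcongr
      _ = n ^ 5 := by ring
  refine ⟨by positivity, h.trans' ?_, h.trans' ?_, h.trans' ?_, ?_⟩
  · calc (1024 : ℝ) = 2 ^ 10 := by norm_num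
      _ ≤ (n : ℝ) ^ 10 := by gcongr
      _ ≤ n ^ (5 * C + 10) := pow_le_pow_right₀ hn1 (by lia)
  · calc 128 * (n : ℝ) = 2 ^ 7 * n := by norm_num
      _ ≤ n ^ 7 * n := by gcongr
      _ = n ^ 8 := by ring
      _ ≤ n ^ (5 * C + 10) := pow_le_pow_right₀ hn1 (by lia)
  · calc 8 * (16 * n : ℝ) ^ C = 2 ^ 3 * (16 * n : ℝ) ^ C := by norm_num
      _ ≤ n ^ 3 * (n ^ 5) ^ C := by gcongr
      _ = n ^ (5 * C + 3) := by rw [← pow_mul, ← pow_add, add_comm]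
      _ ≤ n ^ (5 * C + 10) := pow_le_pow_right₀ hn1 (by lia)
  · rw [← Real.rpow_natCast 2 t, ← Real.rpow_add two_pos, ← Real.rpow_natCast _ 2,
      ← Real.rpow_natCast _ C, ← Real.rpow_mul two_pos.le, ← Real.rpow_mul two_pos.le]
    refine Real.rpow_le_rpow_of_exponent_le one_le_two ?_
    have : ε + 1 ≤ 2 * (ε * C) := by linarith
    calc ε * t + t = (ε + 1) * t := by ring
      _ ≤ 2 * (ε * C) * t := by gcongr
      _ = ε * t * (2 : ℕ) * C := by push_cast; ring

lemma exists_parameters {ε : ℝ} (hε : 0 < ε) (hε1 : ε ≤ 1) :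
    ∃ C c : ℕ, ∀ n t : ℕ, 2 ≤ n → c * Real.logb 2 n ≤ t →
      Parameters n C (2 ^ t) (2 ^ (ε * t)) := by
  refine ⟨⌈1 / ε⌉₊, ⌈((5 * ⌈1 / ε⌉₊ + 10 : ℕ) : ℝ) / ε⌉₊, fun n t hn ht => ?_⟩
  set C := ⌈1 / ε⌉₊
  have hn2 : (2 : ℝ) ≤ n := by exact_mod_cast hn
  refine Parameters.of_pow_le hn hε1 ((div_le_iff₀' hε).mp (Nat.le_ceil _)) ?_
  calc (n : ℝ) ^ (5 * C + 10) = (2 ^ Real.logb 2 n) ^ ((5 * C + 10 : ℕ) : ℝ) := by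
        rw [Real.rpow_logb two_pos (by norm_num) (by linarith), Real.rpow_natCast]
    _ = 2 ^ (Real.logb 2 n * (5 * C + 10 : ℕ)) := (Real.rpow_mul two_pos.le _ _).symm
    _ ≤ 2 ^ (ε * t) := by
        refine Real.rpow_le_rpow_of_exponent_le one_le_two ?_
        have hlog : 0 ≤ Real.logb 2 n := Real.logb_nonneg one_lt_two (by linarith)
        calc Real.logb 2 n * (5 * C + 10 : ℕ)
            ≤ Real.logb 2 n * (ε * ⌈((5 * C + 10 : ℕ) : ℝ) / ε⌉₊) := by
              gcongr
              exact (div_le_iff₀' hε).mp (Nat.le_ceil _)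
          _ = ε * (⌈((5 * C + 10 : ℕ) : ℝ) / ε⌉₊ * Real.logb 2 n) := by ring
          _ ≤ ε * t := by gcongr

end Parameters

section PowersetSums

variable {ι : Type*} {F : Finset ι} {n : ℕ} {s : ℝ}

lemma sum_powerset_pow_card_le (hs : 0 ≤ s) (hF : F.card ≤ n) (h : 16 * n * s ≤ 1) :
    ∑ K ∈ F.powerset, s ^ K.card ≤ 9 / 8 := by
  have exp_le : Real.exp (1 / 16) ≤ 9 / 8 := by
    have := Real.add_one_le_exp (-(1 / 16 : ℝ))
    rw [Real.exp_neg, le_inv_comm₀ (by norm_num) (Real.exp_pos _)] at this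
    exact this.trans (by norm_num)
  calc ∑ K ∈ F.powerset, s ^ K.card = (s + 1) ^ F.card := by
        simpa only [one_pow, mul_one] using Finset.sum_pow_mul_eq_add_pow s 1 F
    _ ≤ (s + 1) ^ n := pow_le_pow_right₀ (by linarith) hF
    _ ≤ Real.exp s ^ n := by gcongr; exact Real.add_one_le_exp s
    _ = Real.exp (n * s) := (Real.exp_nat_mul s n).symm
    _ ≤ 9 / 8 := (Real.exp_le_exp.mpr (by linarith)).trans exp_le

lemma sum_powerset_erase_empty_pow_card_le [DecidableEq ι] (hs : 0 ≤ s) (hF : F.card ≤ n)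
    (h : 16 * n * s ≤ 1) : ∑ K ∈ F.powerset.erase ∅, s ^ K.card ≤ 1 / 8 := by
  have total := sum_powerset_pow_card_le hs hF h
  rw [← Finset.add_sum_erase _ _ (Finset.empty_mem_powerset F), Finset.card_empty,
    pow_zero] at total
  linarith

end PowersetSums

section Unbiased

variable {ι Λ : Type*} {μ : (ι → Λ) → ℝ} {gd : Λ → Λ → Bool} {X Y : Finset (ι → Λ)}
  {F I J K : Finset ι} {ω θ l : ℝ} {C : ℕ} {x : ι → Λ}

/-- The parity biases of `x` on the cylinders of `Y` are small whenever the cylinder fixes at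
most `1 / C` times as many coordinates as the parity involves. -/
def Unbiased (μ : (ι → Λ) → ℝ) (gd : Λ → Λ → Bool) (Y : Finset (ι → Λ)) (F : Finset ι)
    (C : ℕ) (θ ω : ℝ) (x : ι → Λ) : Prop :=
  ∀ K ⊆ F, K.Nonempty → ∀ J ⊆ F, Disjoint J K → C * J.card ≤ K.card → ∀ v : J → Λ,
    |bias μ gd (cylinder Y J v) K x| ≤ θ ^ K.card * ω ^ J.card * mass μ Y

lemma mass_biUnion_le {α β : Type*} [DecidableEq α] {μ : α → ℝ} (hμ : 0 ≤ μ) (s : Finset β)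
    (f : β → Finset α) : mass μ (s.biUnion f) ≤ ∑ b ∈ s, mass μ (f b) := by
  have hsub : ∀ x ∈ s.biUnion f, μ x ≤ ∑ b ∈ s, if x ∈ f b then μ x else 0 := by
    intro x hx
    obtain ⟨b, hb, hxb⟩ := Finset.mem_biUnion.mp hx
    refine le_trans (if_pos hxb).ge
      (Finset.single_le_sum (f := fun b => if x ∈ f b then μ x else 0) (fun c _ => ?_) hb)
    split_ifs
    exacts [hμ x, le_rfl]
  refine (Finset.sum_le_sum hsub).trans ?_
  rw [Finset.sum_comm]
  refine Finset.sum_le_sum fun b hb => ?_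
  rw [← Finset.sum_filter, Finset.filter_mem_eq_inter,
    Finset.inter_eq_right.mpr (Finset.subset_biUnion_of_mem f hb), mass]

lemma mass_biased_le [DecidableEq ι] [Fintype Λ] (hμ : 0 ≤ μ) (hω : 0 < ω) (hθ : 0 < θ)
    (hl : 0 ≤ l) (hgd : SqNormLE (signMatrix gd) l) (hJ : J ⊆ F) (hK : K ⊆ F)
    (hJK : Disjoint J K) (hX : IsSpread μ ω F X) (hY : IsSpread μ ω F Y) (hY0 : 0 < mass μ Y) :
    mass μ {x ∈ X | ∃ v : J → Λ, θ ^ K.card * ω ^ J.card * mass μ Y <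
        |bias μ gd (cylinder Y J v) K x|} ≤
      (ω ^ 2 * l / θ ^ 2) ^ K.card * (1 / ω) ^ J.card * mass μ X := by
  set threshold := θ ^ K.card * ω ^ J.card * mass μ Y
  have threshold_pos : 0 < threshold := by positivity
  have markov : mass μ {x ∈ X | ∃ v : J → Λ, threshold < |bias μ gd (cylinder Y J v) K x|} *
      threshold ^ 2 ≤ ∑ x ∈ X, μ x * ∑ v, bias μ gd (cylinder Y J v) K x ^ 2 := by
    rw [mass, Finset.sum_mul]
    refine (Finset.sum_le_sum fun x hx => ?_).trans
      (Finset.sum_le_sum_of_subset_of_nonneg (Finset.filter_subset _ _) fun x _ _ =>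
        mul_nonneg (hμ x) (Finset.sum_nonneg fun v _ => sq_nonneg _))
    obtain ⟨-, v, hv⟩ := Finset.mem_filter.mp hx
    have : threshold ^ 2 ≤ bias μ gd (cylinder Y J v) K x ^ 2 :=
      sq_le_sq.mpr ((abs_of_pos threshold_pos).trans_le hv.le)
    exact mul_le_mul_of_nonneg_left (this.trans
      (Finset.single_le_sum (f := fun v => bias μ gd (cylinder Y J v) K x ^ 2)
        (fun v _ => sq_nonneg _) (Finset.mem_univ v))) (hμ x)
  refine le_of_mul_le_mul_right (markov.trans
    ((sum_bias_sq_le hμ hω.le hl hgd hJ hK hJK hX hY).trans_eq ?_)) (pow_pos threshold_pos 2)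
  simp only [threshold, div_pow, one_pow, mul_pow, pow_right_comm _ 2 K.card]
  field_simp

lemma mass_not_unbiased_le [DecidableEq ι] [Fintype Λ] (hμ : 0 ≤ μ) (hω : 0 < ω) (hθ : 0 < θ)
    (hl : 0 ≤ l) (hgd : SqNormLE (signMatrix gd) l) (hX : IsSpread μ ω F X)
    (hY : IsSpread μ ω F Y) (hY0 : 0 < mass μ Y) (C : ℕ) :
    mass μ {x ∈ X | ¬ Unbiased μ gd Y F C θ ω x} ≤
      ∑ p ∈ F.powerset.erase ∅ ×ˢ F.powerset with C * p.2.card ≤ p.1.card,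
        (ω ^ 2 * l / θ ^ 2) ^ p.1.card * (1 / ω) ^ p.2.card * mass μ X := by
  let pairs : Finset (Finset ι × Finset ι) :=
    {p ∈ F.powerset.erase ∅ ×ˢ F.powerset | C * p.2.card ≤ p.1.card}
  let disjointPairs : Finset (Finset ι × Finset ι) := {p ∈ pairs | Disjoint p.2 p.1}
  let biased (p : Finset ι × Finset ι) : Finset (ι → Λ) :=
    {x ∈ X | ∃ v : p.2 → Λ, θ ^ p.1.card * ω ^ p.2.card * mass μ Y <
      |bias μ gd (cylinder Y p.2 v) p.1 x|}
  have mem_disjointPairs {K J : Finset ι} : (K, J) ∈ disjointPairs ↔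
      (((K.Nonempty ∧ K ⊆ F) ∧ J ⊆ F) ∧ C * J.card ≤ K.card) ∧ Disjoint J K := by
    simp only [disjointPairs, pairs, Finset.mem_filter, Finset.mem_product, Finset.mem_erase,
      Finset.mem_powerset, ← Finset.nonempty_iff_ne_empty]
  have covered : ({x ∈ X | ¬ Unbiased μ gd Y F C θ ω x} : Finset (ι → Λ)) ⊆
      disjointPairs.biUnion biased := by
    intro x hx
    obtain ⟨hxX, hx⟩ := Finset.mem_filter.mp hx
    simp only [Unbiased, not_forall, not_le] at hx
    obtain ⟨K, hK, hKne, J, hJ, hJK, hCJ, v, hv⟩ := hx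
    exact Finset.mem_biUnion.mpr ⟨(K, J), mem_disjointPairs.mpr ⟨⟨⟨⟨hKne, hK⟩, hJ⟩, hCJ⟩, hJK⟩,
      Finset.mem_filter.mpr ⟨hxX, v, hv⟩⟩
  calc _ ≤ mass μ (disjointPairs.biUnion biased) := mass_mono hμ covered
    _ ≤ ∑ p ∈ disjointPairs, mass μ (biased p) := mass_biUnion_le hμ _ _
    _ ≤ ∑ p ∈ disjointPairs,
          (ω ^ 2 * l / θ ^ 2) ^ p.1.card * (1 / ω) ^ p.2.card * mass μ X := by
        refine Finset.sum_le_sum ?_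
        rintro ⟨K, J⟩ hp
        obtain ⟨⟨⟨⟨-, hK⟩, hJ⟩, -⟩, hJK⟩ := mem_disjointPairs.mp hp
        exact mass_biased_le hμ hω hθ hl hgd hJ hK hJK hX hY hY0
    _ ≤ _ := Finset.sum_le_sum_of_subset_of_nonneg (Finset.filter_subset _ _) fun p _ _ => by
        have := mass_nonneg hμ X
        positivity

lemma exists_unbiased_subset [Fintype ι] [Fintype Λ] {N B : ℝ}
    (P : Parameters (Fintype.card ι) C N B) (hμ : 0 ≤ μ)
    (hgd : SqNormLE (signMatrix gd) (2 * N ^ 2 / B ^ 32)) (hX : IsSpread μ (B ^ 2 / N) F X)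
    (hY : IsSpread μ (B ^ 2 / N) F Y) (hY0 : 0 < mass μ Y) :
    ∃ X' ⊆ X, mass μ X / 2 ≤ mass μ X' ∧
      ∀ x ∈ X', Unbiased μ gd Y F C (1 / B) (B ^ 2 / N) x := by
  have hB := P.B_pos
  have hN := P.N_pos
  have hX0 := mass_nonneg hμ X
  have discarded : mass μ {x ∈ X | ¬ Unbiased μ gd Y F C (1 / B) (B ^ 2 / N) x} ≤
      1 / 8 * (9 / 8) * mass μ X :=
    calc _ ≤ ∑ p ∈ F.powerset.erase ∅ ×ˢ F.powerset with C * p.2.card ≤ p.1.card,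
          ((B ^ 2 / N) ^ 2 * (2 * N ^ 2 / B ^ 32) / (1 / B) ^ 2) ^ p.1.card *
            (1 / (B ^ 2 / N)) ^ p.2.card * mass μ X :=
          mass_not_unbiased_le hμ P.weak_rate_pos (by positivity) (by positivity) hgd hX hY hY0 C
      _ ≤ ∑ p ∈ F.powerset.erase ∅ ×ˢ F.powerset with C * p.2.card ≤ p.1.card,
          (1 / B) ^ p.1.card * (1 / B) ^ p.2.card * mass μ X :=
          Finset.sum_le_sum fun p hp =>
            mul_le_mul_of_nonneg_right (P.moment_le (Finset.mem_filter.mp hp).2) hX0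
      _ ≤ ∑ p ∈ F.powerset.erase ∅ ×ˢ F.powerset,
          (1 / B) ^ p.1.card * (1 / B) ^ p.2.card * mass μ X :=
          Finset.sum_le_sum_of_subset_of_nonneg (Finset.filter_subset _ _)
            fun p _ _ => by positivity
      _ = (∑ K ∈ F.powerset.erase ∅, (1 / B) ^ K.card) *
          (∑ J ∈ F.powerset, (1 / B) ^ J.card) * mass μ X := by
          rw [← Finset.sum_mul, Finset.sum_mul_sum, Finset.sum_product]
      _ ≤ 1 / 8 * (9 / 8) * mass μ X := by
          gcongr
          · exact sum_powerset_erase_empty_pow_card_le (by positivity) F.card_le_univ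
              P.sixteen_mul_le
          · exact sum_powerset_pow_card_le (by positivity) F.card_le_univ P.sixteen_mul_le
  refine ⟨{x ∈ X | Unbiased μ gd Y F C (1 / B) (B ^ 2 / N) x}, Finset.filter_subset _ _, ?_,
    fun x hx => (Finset.mem_filter.mp hx).2⟩
  have partition : mass μ {x ∈ X | Unbiased μ gd Y F C (1 / B) (B ^ 2 / N) x} +
      mass μ {x ∈ X | ¬ Unbiased μ gd Y F C (1 / B) (B ^ 2 / N) x} = mass μ X :=
    Finset.sum_filter_add_sum_filter_not _ _ _
  linarith

/-- The members `y` of `Y` for which the gadget values on `(x, y)` agree with `z` on `I`. -/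
def gadgetEvent (gd : Λ → Λ → Bool) (Y : Finset (ι → Λ)) (I : Finset ι) (x : ι → Λ)
    (z : ι → Bool) : Finset (ι → Λ) :=
  {y ∈ Y | ∀ i ∈ I, gd (x i) (y i) = z i}

lemma mem_gadgetEvent {y : ι → Λ} {z : ι → Bool} :
    y ∈ gadgetEvent gd Y I x z ↔ y ∈ Y ∧ ∀ i ∈ I, gd (x i) (y i) = z i :=
  Finset.mem_filter

lemma gadgetEvent_subset (gd : Λ → Λ → Bool) (Y : Finset (ι → Λ)) (I : Finset ι) (x : ι → Λ)
    (z : ι → Bool) : gadgetEvent gd Y I x z ⊆ Y :=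
  Finset.filter_subset _ _

lemma prod_one_add_boolSign_mul (I : Finset ι) (b z : ι → Bool) :
    ∏ i ∈ I, (1 + boolSign (z i) * boolSign (b i)) =
      if ∀ i ∈ I, b i = z i then (2 : ℝ) ^ I.card else 0 := by
  split_ifs with h
  · refine Finset.prod_eq_pow_card fun i hi => ?_
    rw [h i hi, boolSign_mul_self]
    norm_num
  · push Not at h
    obtain ⟨i, hi, hne⟩ := h
    refine Finset.prod_eq_zero hi ?_
    cases hb : b i <;> cases hz : z i <;> simp [boolSign, hb, hz] at hne ⊢

lemma mass_cylinder_gadgetEvent (μ : (ι → Λ) → ℝ) (gd : Λ → Λ → Bool) (Y : Finset (ι → Λ))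
    (I : Finset ι) (x : ι → Λ) (z : ι → Bool) (v : J → Λ) :
    mass μ (cylinder (gadgetEvent gd Y I x z) J v) =
      (1 / 2) ^ I.card *
        ∑ K ∈ I.powerset, (∏ k ∈ K, boolSign (z k)) * bias μ gd (cylinder Y J v) K x := by
  have fourier (y : ι → Λ) : (if ∀ i ∈ I, gd (x i) (y i) = z i then μ y else 0) =
      (1 / 2) ^ I.card * ∑ K ∈ I.powerset,
        (∏ k ∈ K, boolSign (z k)) * (μ y * ∏ k ∈ K, boolSign (gd (x k) (y k))) := by
    simp only [mul_left_comm _ (μ y), ← Finset.mul_sum, ← Finset.prod_mul_distrib]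
    rw [← Finset.prod_one_add, prod_one_add_boolSign_mul I (fun i => gd (x i) (y i)) z]
    split_ifs
    · rw [← mul_pow]; norm_num
    · simp only [mul_zero]
  calc mass μ (cylinder (gadgetEvent gd Y I x z) J v)
      = ∑ y ∈ cylinder Y J v, if ∀ i ∈ I, gd (x i) (y i) = z i then μ y else 0 := by
        rw [mass, cylinder, gadgetEvent, Finset.filter_comm, Finset.sum_filter, cylinder]
    _ = _ := by
        simp only [fourier, bias, Finset.mul_sum]
        rw [Finset.sum_comm]

lemma abs_prod_boolSign_mul (K : Finset ι) (z : ι → Bool) (r : ℝ) :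
    |(∏ k ∈ K, boolSign (z k)) * r| = |r| := by
  rw [abs_mul, abs_prod_boolSign, one_mul]

section GadgetEvent

variable [Fintype ι] {N B : ℝ}

lemma le_mass_gadgetEvent (P : Parameters (Fintype.card ι) C N B) (hμ : 0 ≤ μ) (hI : I ⊆ F)
    (hx : Unbiased μ gd Y F C (1 / B) ω x) (z : ι → Bool) :
    (1 / 2) ^ I.card * (mass μ Y / 2) ≤ mass μ (gadgetEvent gd Y I x z) := by
  have hB := P.B_pos
  have hY := mass_nonneg hμ Y
  have nonempty_part : |∑ K ∈ I.powerset.erase ∅, (∏ k ∈ K, boolSign (z k)) * bias μ gd Y K x| ≤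
      1 / 8 * mass μ Y :=
    calc _ ≤ ∑ K ∈ I.powerset.erase ∅, |bias μ gd Y K x| := by
          simpa only [abs_prod_boolSign_mul] using Finset.abs_sum_le_sum_abs
            (fun K => (∏ k ∈ K, boolSign (z k)) * bias μ gd Y K x) (I.powerset.erase ∅)
      _ ≤ ∑ K ∈ I.powerset.erase ∅, (1 / B) ^ K.card * mass μ Y := by
          refine Finset.sum_le_sum fun K hK => ?_
          obtain ⟨hKne, hK⟩ := Finset.mem_erase.mp hK
          have := hx K ((Finset.mem_powerset.mp hK).trans hI)
            (Finset.nonempty_iff_ne_empty.mpr hKne) ∅ (Finset.empty_subset F)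
            (Finset.disjoint_empty_left K) (by simp only [Finset.card_empty, mul_zero, zero_le])
            ((∅ : Finset ι).restrict x)
          simpa only [cylinder_empty, Finset.card_empty, pow_zero, mul_one] using this
      _ ≤ 1 / 8 * mass μ Y := by
          rw [← Finset.sum_mul]
          gcongr
          exact sum_powerset_erase_empty_pow_card_le (by positivity) I.card_le_univ
            P.sixteen_mul_le
  have expansion := mass_cylinder_gadgetEvent μ gd Y I x z ((∅ : Finset ι).restrict x)
  simp only [cylinder_empty] at expansion
  rw [expansion, ← Finset.add_sum_erase _ _ (Finset.empty_mem_powerset I), bias_empty,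
    Finset.prod_empty, one_mul]
  gcongr
  linarith [(abs_le.mp nonempty_part).1]

lemma Unbiased.abs_bias_cylinder_le (P : Parameters (Fintype.card ι) C N B) (hμ : 0 ≤ μ)
    (hI : I ⊆ F) (hx : Unbiased μ gd Y F C (1 / B) (B ^ 2 / N) x)
    (hY : IsSpread μ (B / N) F Y) (hJ : J ⊆ F) (hJI : Disjoint J I) (hJne : J.Nonempty)
    (hK : K ⊆ I) (v : J → Λ) :
    |bias μ gd (cylinder Y J v) K x| ≤
      1 / 8 * ((B ^ 2 / N) ^ J.card * mass μ Y) * (1 / (16 * Fintype.card ι)) ^ K.card := by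
  have hB := P.B_pos
  have hN := P.N_pos
  have hY0 := mass_nonneg hμ Y
  have one_le_card : (1 : ℝ) ≤ Fintype.card ι := by
    exact_mod_cast Fintype.card_pos_iff.mpr ⟨hJne.choose⟩
  set G : ℝ := 16 * Fintype.card ι
  rcases le_or_gt K.card (C * J.card) with hle | hlt
  · calc |bias μ gd (cylinder Y J v) K x| ≤ (B / N) ^ J.card * mass μ Y :=
          (abs_bias_le hμ gd _ K x).trans (hY J hJ v)
      _ ≤ (B / N) ^ J.card * mass μ Y * (G ^ (C * J.card) * (1 / G) ^ K.card) := by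
          refine le_mul_of_one_le_right (by positivity) ?_
          rw [one_div, inv_pow, ← div_eq_mul_inv, one_le_div (by positivity)]
          exact pow_le_pow_right₀ (by linarith) hle
      _ = (B / N * G ^ C) ^ J.card * mass μ Y * (1 / G) ^ K.card := by
          rw [pow_mul, mul_pow]; ring
      _ ≤ (1 / 8 * (B ^ 2 / N)) ^ J.card * mass μ Y * (1 / G) ^ K.card := by
          have := P.strong_rate_mul_pow_le
          gcongr
      _ ≤ 1 / 8 * ((B ^ 2 / N) ^ J.card * mass μ Y) * (1 / G) ^ K.card := by
          rw [mul_pow, ← mul_assoc]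
          gcongr
          exact pow_le_of_le_one (by norm_num) (by norm_num) hJne.card_ne_zero
  · have hKne : K.Nonempty := Finset.card_pos.mp (hlt.trans_le' (Nat.zero_le _))
    calc |bias μ gd (cylinder Y J v) K x| ≤ (1 / B) ^ K.card * (B ^ 2 / N) ^ J.card * mass μ Y :=
          hx K (hK.trans hI) hKne J hJ (hJI.mono_right hK) hlt.le v
      _ ≤ (1 / 8 * (1 / G)) ^ K.card * (B ^ 2 / N) ^ J.card * mass μ Y := by
          rw [one_div_mul_one_div]
          gcongr
          linarith [P.mul_le_B]
      _ ≤ 1 / 8 * (1 / G) ^ K.card * (B ^ 2 / N) ^ J.card * mass μ Y := by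
          rw [mul_pow]
          gcongr
          exact pow_le_of_le_one (by norm_num) (by norm_num) hKne.card_ne_zero
      _ = 1 / 8 * ((B ^ 2 / N) ^ J.card * mass μ Y) * (1 / G) ^ K.card := by ring

lemma isSpread_gadgetEvent [DecidableEq ι] (P : Parameters (Fintype.card ι) C N B) (hμ : 0 ≤ μ)
    (hI : I ⊆ F) (hx : Unbiased μ gd Y F C (1 / B) (B ^ 2 / N) x)
    (hY : IsSpread μ (B / N) F Y) (z : ι → Bool) :
    IsSpread μ (B ^ 2 / N) (F \ I) (gadgetEvent gd Y I x z) := by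
  intro J hJ v
  rcases J.eq_empty_or_nonempty with rfl | hJne
  · rw [cylinder_empty, Finset.card_empty, pow_zero, one_mul]
  obtain ⟨hJF, hJI⟩ := Finset.subset_sdiff.mp hJ
  have hY0 := mass_nonneg hμ Y
  have hω := P.weak_rate_pos
  have card_mul_le : 16 * (Fintype.card ι : ℝ) * (1 / (16 * Fintype.card ι)) ≤ 1 := by
    rw [mul_one_div]; exact div_self_le_one _
  have expansion_le : ∑ K ∈ I.powerset,
      (∏ k ∈ K, boolSign (z k)) * bias μ gd (cylinder Y J v) K x ≤
        (B ^ 2 / N) ^ J.card * (mass μ Y / 2) :=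
    calc _ ≤ ∑ K ∈ I.powerset, 1 / 8 * ((B ^ 2 / N) ^ J.card * mass μ Y) *
          (1 / (16 * Fintype.card ι)) ^ K.card :=
          Finset.sum_le_sum fun K hK => (le_abs_self _).trans <| by
            rw [abs_prod_boolSign_mul]
            exact hx.abs_bias_cylinder_le P hμ hI hY hJF hJI hJne (Finset.mem_powerset.mp hK) v
      _ ≤ 1 / 8 * ((B ^ 2 / N) ^ J.card * mass μ Y) * (9 / 8) := by
          rw [← Finset.mul_sum]
          gcongr
          exact sum_powerset_pow_card_le (by positivity) I.card_le_univ card_mul_le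
      _ ≤ (B ^ 2 / N) ^ J.card * (mass μ Y / 2) := by
          have : 0 ≤ (B ^ 2 / N) ^ J.card * mass μ Y := by positivity
          linarith
  calc mass μ (cylinder (gadgetEvent gd Y I x z) J v)
      ≤ (1 / 2) ^ I.card * ((B ^ 2 / N) ^ J.card * (mass μ Y / 2)) := by
        rw [mass_cylinder_gadgetEvent]
        gcongr
    _ = (B ^ 2 / N) ^ J.card * ((1 / 2) ^ I.card * (mass μ Y / 2)) := by ring
    _ ≤ (B ^ 2 / N) ^ J.card * mass μ (gadgetEvent gd Y I x z) := by
        gcongr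
        exact le_mass_gadgetEvent P hμ hI hx z

end GadgetEvent

end Unbiased

/-! ### Simulating a protocol against an adversary -/

/-- An adversary for the search problem `Sol`: `H F z` says that the bits of `z` outside `F` have
been answered so that the adversary can answer any further bits (`answer`), and refute any output
proposed after fewer than `Q` answers (`refute`). -/
structure IsAdversary {ι R : Type*} [Fintype ι] [DecidableEq ι] (Sol : (ι → Bool) → R → Prop)
    (Q : ℕ) (H : Finset ι → (ι → Bool) → Prop) : Prop where
  answer : ∀ F z, H F z → ∀ K ⊆ F, ∃ z', (∀ j ∉ K, z' j = z j) ∧ H (F \ K) z'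
  refute : ∀ F z, H F z → Fᶜ.card < Q → ∀ r, ∃ w, (∀ j ∉ F, w j = z j) ∧ ¬ Sol w r

/-- An intermediate state of the simulation. The coordinates in `I` were fixed on Alice's side `X`
and those in `J` on Bob's side `Y`; each of them costs the side fixing it a factor `ω / 2` in mass
and the other side, which is conditioned on the answer `z`, a factor `1 / 4`. The factor `κ`
accounts for the bits communicated. -/
structure SimulationState {ι Λ : Type*} [Fintype ι] [DecidableEq ι] (μ : (ι → Λ) → ℝ)
    (gd : Λ → Λ → Bool) (H : Finset ι → (ι → Bool) → Prop) (ω κ : ℝ) (I J : Finset ι)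
    (z : ι → Bool) (X Y : Finset (ι → Λ)) : Prop where
  disjoint : Disjoint I J
  adversary : H (I ∪ J)ᶜ z
  le_mass_left : κ * ((ω / 2) ^ I.card * (1 / 4) ^ J.card) ≤ mass μ X
  le_mass_right : κ * ((ω / 2) ^ J.card * (1 / 4) ^ I.card) ≤ mass μ Y
  fixed_left : ∃ u : ι → Λ, ∀ x ∈ X, ∀ i ∈ I, x i = u i
  fixed_right : ∃ v : ι → Λ, ∀ y ∈ Y, ∀ j ∈ J, y j = v j
  gadget_eq : ∀ x ∈ X, ∀ y ∈ Y, ∀ j ∈ I ∪ J, gd (x j) (y j) = z j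

/-- A state of the simulation between rounds: both sides are spread on the free coordinates. -/
structure SpreadState {ι Λ : Type*} [Fintype ι] [DecidableEq ι] (μ : (ι → Λ) → ℝ)
    (gd : Λ → Λ → Bool) (H : Finset ι → (ι → Bool) → Prop) (ω κ : ℝ) (I J : Finset ι)
    (z : ι → Bool) (X Y : Finset (ι → Λ)) : Prop
    extends SimulationState μ gd H ω κ I J z X Y where
  spread_left : IsSpread μ ω (I ∪ J)ᶜ X
  spread_right : IsSpread μ ω (I ∪ J)ᶜ Y

/-- Some subrectangle of `X × Y` carries a state of the simulation between rounds. -/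
def HasSpreadState {ι Λ : Type*} [Fintype ι] [DecidableEq ι] (μ : (ι → Λ) → ℝ)
    (gd : Λ → Λ → Bool) (H : Finset ι → (ι → Bool) → Prop) (ω κ : ℝ)
    (X Y : Finset (ι → Λ)) : Prop :=
  ∃ I J z, ∃ X' ⊆ X, ∃ Y' ⊆ Y, SpreadState μ gd H ω κ I J z X' Y'

section Simulation

variable {ι Λ : Type*} [Fintype ι] [DecidableEq ι] {μ : (ι → Λ) → ℝ} {gd : Λ → Λ → Bool}
  {H : Finset ι → (ι → Bool) → Prop} {ω κ : ℝ} {I J K : Finset ι} {z z' : ι → Bool}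
  {X Y X' Y' : Finset (ι → Λ)}

lemma SimulationState.swap (s : SimulationState μ gd H ω κ I J z X Y) :
    SimulationState μ (flip gd) H ω κ J I z Y X where
  disjoint := s.disjoint.symm
  adversary := Finset.union_comm I J ▸ s.adversary
  le_mass_left := s.le_mass_right
  le_mass_right := s.le_mass_left
  fixed_left := s.fixed_right
  fixed_right := s.fixed_left
  gadget_eq y hy x hx j hj := s.gadget_eq x hx y hy j (Finset.union_comm I J ▸ hj)

lemma SpreadState.swap (s : SpreadState μ gd H ω κ I J z X Y) :
    SpreadState μ (flip gd) H ω κ J I z Y X where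
  toSimulationState := s.toSimulationState.swap
  spread_left := Finset.union_comm I J ▸ s.spread_right
  spread_right := Finset.union_comm I J ▸ s.spread_left

lemma HasSpreadState.swap (h : HasSpreadState μ (flip gd) H ω κ Y X) :
    HasSpreadState μ gd H ω κ X Y := by
  obtain ⟨I, J, z, Y', hY, X', hX, s⟩ := h
  exact ⟨J, I, z, X', hX, Y', hY, s.swap⟩

lemma HasSpreadState.mono (h : HasSpreadState μ gd H ω κ X' Y') (hX : X' ⊆ X) (hY : Y' ⊆ Y) :
    HasSpreadState μ gd H ω κ X Y := by
  obtain ⟨I, J, z, X'', hX', Y'', hY', s⟩ := h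
  exact ⟨I, J, z, X'', hX'.trans hX, Y'', hY'.trans hY, s⟩

lemma SimulationState.mass_left_pos (s : SimulationState μ gd H ω κ I J z X Y) (hω : 0 < ω)
    (hκ : 0 < κ) : 0 < mass μ X :=
  lt_of_lt_of_le (by positivity) s.le_mass_left

lemma SimulationState.mass_right_pos (s : SimulationState μ gd H ω κ I J z X Y) (hω : 0 < ω)
    (hκ : 0 < κ) : 0 < mass μ Y :=
  s.swap.mass_left_pos hω hκ

lemma SimulationState.halve_left (s : SimulationState μ gd H ω κ I J z X Y) (hω : 0 < ω)
    (hκ : 0 < κ) (hX : X' ⊆ X) (hmass : mass μ X / 2 ≤ mass μ X') :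
    SimulationState μ gd H ω (κ / 2) I J z X' Y where
  disjoint := s.disjoint
  adversary := s.adversary
  le_mass_left := by linarith [s.le_mass_left]
  le_mass_right := (mul_le_mul_of_nonneg_right (by linarith) (by positivity)).trans s.le_mass_right
  fixed_left := let ⟨u, hu⟩ := s.fixed_left; ⟨u, fun x hx => hu x (hX hx)⟩
  fixed_right := s.fixed_right
  gadget_eq x hx := s.gadget_eq x (hX hx)

lemma compl_union_union (I J K : Finset ι) : (I ∪ K ∪ J)ᶜ = (I ∪ J)ᶜ \ K := by
  ext i
  simp only [Finset.mem_compl, Finset.mem_union, Finset.mem_sdiff]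
  tauto

lemma SimulationState.query (s : SimulationState μ gd H ω κ I J z X Y) (hω : 0 < ω)
    (hK : K ⊆ (I ∪ J)ᶜ) (hz' : ∀ j ∉ K, z' j = z j) (hH : H ((I ∪ J)ᶜ \ K) z') {u : ι → Λ}
    (hX : X' ⊆ X) (hu : ∀ x ∈ X', ∀ k ∈ K, x k = u k)
    (hmassX : (ω / 2) ^ K.card * mass μ X ≤ mass μ X')
    (hmassY : (1 / 4) ^ K.card * mass μ Y ≤ mass μ (gadgetEvent gd Y K u z')) :
    SimulationState μ gd H ω κ (I ∪ K) J z' X' (gadgetEvent gd Y K u z') := by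
  have not_mem_K {j : ι} (hj : j ∈ I ∪ J) : j ∉ K := fun hjK => Finset.mem_compl.mp (hK hjK) hj
  have hIK : Disjoint I K :=
    Finset.disjoint_left.mpr fun i hi => not_mem_K (Finset.mem_union_left J hi)
  have hKJ : Disjoint K J :=
    Finset.disjoint_right.mpr fun j hj => not_mem_K (Finset.mem_union_right I hj)
  have hY := gadgetEvent_subset gd Y K u z'
  obtain ⟨u₀, hu₀⟩ := s.fixed_left
  obtain ⟨v₀, hv₀⟩ := s.fixed_right
  refine ⟨Finset.disjoint_union_left.mpr ⟨s.disjoint, hKJ⟩, compl_union_union I J K ▸ hH,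
    hmassX.trans' ?_, hmassY.trans' ?_, ⟨K.piecewise u u₀, fun x hx i hi => ?_⟩,
    ⟨v₀, fun y hy => hv₀ y (hY hy)⟩, fun x hx y hy j hj => ?_⟩
  · calc κ * ((ω / 2) ^ (I ∪ K).card * (1 / 4) ^ J.card)
        = (ω / 2) ^ K.card * (κ * ((ω / 2) ^ I.card * (1 / 4) ^ J.card)) := by
          rw [Finset.card_union_of_disjoint hIK, pow_add]; ring
      _ ≤ (ω / 2) ^ K.card * mass μ X := by gcongr; exact s.le_mass_left
  · calc κ * ((ω / 2) ^ J.card * (1 / 4) ^ (I ∪ K).card)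
        = (1 / 4) ^ K.card * (κ * ((ω / 2) ^ J.card * (1 / 4) ^ I.card)) := by
          rw [Finset.card_union_of_disjoint hIK, pow_add]; ring
      _ ≤ (1 / 4) ^ K.card * mass μ Y := by gcongr; exact s.le_mass_right
  · by_cases hiK : i ∈ K
    · rw [Finset.piecewise_eq_of_mem _ _ _ hiK, hu x hx i hiK]
    · rw [Finset.piecewise_eq_of_notMem _ _ _ hiK,
        hu₀ x (hX hx) i ((Finset.mem_union.mp hi).resolve_right hiK)]
  · by_cases hjK : j ∈ K
    · rw [hu x hx j hjK, (mem_gadgetEvent.mp hy).2 j hjK]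
    · have hj' : j ∈ I ∪ J := by
        simp only [Finset.mem_union] at hj ⊢
        tauto
      rw [s.gadget_eq x (hX hx) y (hY hy) j hj', hz' j hjK]

section Rounds

variable [Fintype Λ] {C Q : ℕ} {N B : ℝ} {R : Type*} {Sol : (ι → Bool) → R → Prop}

/-- One step of restoring the spread of Alice's side: fix a maximal heavy cylinder of unbiased
inputs, on coordinates `K`, and condition Bob's side on the adversary's answers there. If `K` is
nonempty the constant losses are absorbed by those charged to the coordinates of `K`. -/
lemma SimulationState.exists_query (P : Parameters (Fintype.card ι) C N B) (hμ : 0 ≤ μ)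
    (hH : IsAdversary Sol Q H) (hgd : SqNormLE (signMatrix gd) (2 * N ^ 2 / B ^ 32)) (hκ : 0 < κ)
    (s : SimulationState μ gd H (B / N) κ I J z X Y) (hX : IsSpread μ (B ^ 2 / N) (I ∪ J)ᶜ X)
    (hY : IsSpread μ (B / N) (I ∪ J)ᶜ Y) :
    (∃ X' ⊆ X, SpreadState μ gd H (B / N) (κ / 2) I J z X' Y) ∨
      ∃ K ⊆ (I ∪ J)ᶜ, K.Nonempty ∧ ∃ z', ∃ X' ⊆ X, ∃ Y' ⊆ Y,
        SimulationState μ gd H (B / N) κ (I ∪ K) J z' X' Y' ∧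
        IsSpread μ (B / N) (I ∪ K ∪ J)ᶜ X' ∧ IsSpread μ (B ^ 2 / N) (I ∪ K ∪ J)ᶜ Y' := by
  have hω := P.strong_rate_pos
  have hX0 := mass_nonneg hμ X
  have hY0 := mass_nonneg hμ Y
  obtain ⟨X₁, hX₁, hmass₁, unbiased⟩ := exists_unbiased_subset P hμ hgd hX
    (hY.mono_rate hμ hω.le P.strong_rate_le) (s.mass_right_pos hω hκ)
  have X₁_nonempty : X₁.Nonempty :=
    nonempty_of_mass_pos (hmass₁.trans_lt' (half_pos (s.mass_left_pos hω hκ)))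
  obtain ⟨K, hK, u, hu, hmassK, hspread⟩ := exists_spread_cylinder hμ hω.le (I ∪ J)ᶜ X₁_nonempty
  have cylinder_subset_X := (cylinder_subset X₁ K (K.restrict u)).trans hX₁
  rcases K.eq_empty_or_nonempty with rfl | hKne
  · rw [Finset.card_empty, pow_zero, one_mul] at hmassK
    exact .inl ⟨_, cylinder_subset_X,
      { toSimulationState := s.halve_left hω hκ cylinder_subset_X (hmass₁.trans hmassK)
        spread_left := by rwa [Finset.sdiff_empty] at hspread
        spread_right := hY }⟩
  · obtain ⟨z', hz', hHz'⟩ := hH.answer _ z s.adversary K hK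
    have half_pow_le : (1 / 2 : ℝ) ^ K.card ≤ 1 / 2 :=
      pow_le_of_le_one (by norm_num) (by norm_num) hKne.card_ne_zero
    refine .inr ⟨K, hK, hKne, z', _, cylinder_subset_X, gadgetEvent gd Y K u z',
      gadgetEvent_subset gd Y K u z', s.query hω hK hz' hHz' cylinder_subset_X
        (fun x hx => (mem_cylinder_restrict.mp hx).2) (hmassK.trans' ?_)
        ((le_mass_gadgetEvent P hμ hK (unbiased u hu) z').trans' ?_), ?_, ?_⟩
    · calc (B / N / 2) ^ K.card * mass μ X
          = (B / N) ^ K.card * ((1 / 2) ^ K.card * mass μ X) := by rw [div_pow, one_div_pow]; ring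
        _ ≤ (B / N) ^ K.card * (1 / 2 * mass μ X) := by gcongr
        _ ≤ (B / N) ^ K.card * mass μ X₁ := by gcongr; linarith
    · calc (1 / 4) ^ K.card * mass μ Y = (1 / 2) ^ K.card * ((1 / 2) ^ K.card * mass μ Y) := by
            rw [← mul_assoc, ← mul_pow]; norm_num
        _ ≤ (1 / 2) ^ K.card * (1 / 2 * mass μ Y) := by gcongr
        _ = (1 / 2) ^ K.card * (mass μ Y / 2) := by ring
    · rwa [compl_union_union]
    · rw [compl_union_union]
      exact isSpread_gadgetEvent P hμ hK (unbiased u hu) hY z'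

lemma SimulationState.hasSpreadState (P : Parameters (Fintype.card ι) C N B) (hμ : 0 ≤ μ)
    (hH : IsAdversary Sol Q H) (hgd : SqNormLE (signMatrix gd) (2 * N ^ 2 / B ^ 32)) (hκ : 0 < κ)
    (s : SimulationState μ gd H (B / N) κ I J z X Y) (hX : IsSpread μ (B ^ 2 / N) (I ∪ J)ᶜ X)
    (hY : IsSpread μ (B / N) (I ∪ J)ᶜ Y) : HasSpreadState μ gd H (B / N) (κ / 2) X Y := by
  induction hfree : (I ∪ J)ᶜ.card using Nat.strong_induction_on generalizing gd I J z X Y with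
  | _ k ih =>
    rcases s.exists_query P hμ hH hgd hκ hX hY with
      ⟨X', hX', s'⟩ | ⟨K, hK, hKne, z', X', hX', Y', hY', s', hspreadX, hspreadY⟩
    · exact ⟨I, J, z, X', hX', Y, subset_rfl, s'⟩
    · have fewer_free : (J ∪ (I ∪ K))ᶜ.card < k := by
        have := hKne.card_pos
        have := Finset.card_le_card hK
        rw [Finset.union_comm, compl_union_union, Finset.card_sdiff_of_subset hK]
        lia
      rw [Finset.union_comm (I ∪ K)] at hspreadX hspreadY
      have hgd' : SqNormLE (signMatrix (flip gd)) (2 * N ^ 2 / B ^ 32) :=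
        hgd.transpose (by have := P.B_pos; positivity)
      exact (ih _ fewer_free hgd' s'.swap hspreadY hspreadX rfl).swap.mono hX' hY'

end Rounds
end Simulation

section Bits

variable {ι Λ : Type*} {μ : (ι → Λ) → ℝ} {X X' : Finset (ι → Λ)} {F : Finset ι} {ω : ℝ}

lemma exists_half_mass_le {α : Type*} (μ : α → ℝ) (X : Finset α) (h : α → Bool) :
    ∃ b, mass μ X / 2 ≤ mass μ {x ∈ X | h x = b} := by
  have partition : mass μ {x ∈ X | h x = true} + mass μ {x ∈ X | h x = false} = mass μ X := by
    simp only [mass, ← Bool.not_eq_true]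
    exact Finset.sum_filter_add_sum_filter_not _ _ _
  rcases le_total (mass μ {x ∈ X | h x = true}) (mass μ {x ∈ X | h x = false}) with hle | hle
  · exact ⟨false, by linarith⟩
  · exact ⟨true, by linarith⟩

lemma IsSpread.of_half_mass_le (hμ : 0 ≤ μ) (hω : 0 ≤ ω) (hX : IsSpread μ ω F X) (hX' : X' ⊆ X)
    (hmass : mass μ X / 2 ≤ mass μ X') : IsSpread μ (2 * ω) F X' := by
  intro J hJ w
  rcases J.eq_empty_or_nonempty with rfl | hJne
  · rw [cylinder_empty, Finset.card_empty, pow_zero, one_mul]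
  have two_le : (2 : ℝ) ≤ 2 ^ J.card := le_self_pow₀ one_le_two hJne.card_ne_zero
  have := mass_nonneg hμ X'
  calc mass μ (cylinder X' J w) ≤ mass μ (cylinder X J w) :=
        mass_mono hμ (Finset.filter_subset_filter _ hX')
    _ ≤ ω ^ J.card * mass μ X := hX J hJ w
    _ ≤ ω ^ J.card * (2 * mass μ X') := by gcongr; linarith
    _ ≤ ω ^ J.card * (2 ^ J.card * mass μ X') := by gcongr
    _ = (2 * ω) ^ J.card * mass μ X' := by ring

end Bits

section Simulation

variable {ι Λ : Type} [Fintype ι] [DecidableEq ι] [Fintype Λ] {μ : (ι → Λ) → ℝ}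
  {gd : Λ → Λ → Bool} {H : Finset ι → (ι → Bool) → Prop} {κ N B : ℝ} {I J : Finset ι}
  {z : ι → Bool} {X Y : Finset (ι → Λ)} {C Q : ℕ} {R : Type} {Sol : (ι → Bool) → R → Prop}

lemma SpreadState.bit_left (P : Parameters (Fintype.card ι) C N B) (hμ : 0 ≤ μ)
    (hH : IsAdversary Sol Q H) (hgd : SqNormLE (signMatrix gd) (2 * N ^ 2 / B ^ 32)) (hκ : 0 < κ)
    (s : SpreadState μ gd H (B / N) κ I J z X Y) (α : (ι → Λ) → Bool) :
    ∃ a, HasSpreadState μ gd H (B / N) (κ / 4) {x ∈ X | α x = a} Y := by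
  have hω := P.strong_rate_pos
  obtain ⟨a, hmass⟩ := exists_half_mass_le μ X α
  have hsub := Finset.filter_subset (fun x => α x = a) X
  have hspread := (s.spread_left.of_half_mass_le hμ hω.le hsub hmass).mono_rate hμ
    (by positivity) P.two_mul_strong_rate_le
  refine ⟨a, ?_⟩
  rw [show κ / 4 = κ / 2 / 2 by ring]
  exact (s.halve_left hω hκ hsub hmass).hasSpreadState P hμ hH hgd (half_pos hκ) hspread
    s.spread_right

lemma SpreadState.bits (P : Parameters (Fintype.card ι) C N B) (hμ : 0 ≤ μ)
    (hH : IsAdversary Sol Q H) (hgd : SqNormLE (signMatrix gd) (2 * N ^ 2 / B ^ 32)) (hκ : 0 < κ)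
    (s : SpreadState μ gd H (B / N) κ I J z X Y) (α β : (ι → Λ) → Bool) :
    ∃ a b, HasSpreadState μ gd H (B / N) (κ / 16) {x ∈ X | α x = a} {y ∈ Y | β y = b} := by
  have hgd' : SqNormLE (signMatrix (flip gd)) (2 * N ^ 2 / B ^ 32) :=
    hgd.transpose (by have := P.B_pos; positivity)
  obtain ⟨a, I', J', z', X', hX', Y', hY', s'⟩ := s.bit_left P hμ hH hgd hκ α
  obtain ⟨b, h⟩ := s'.swap.bit_left P hμ hH hgd' (by positivity) β
  rw [show κ / 16 = κ / 4 / 4 by ring]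
  exact ⟨a, b, h.swap.mono hX' (Finset.filter_subset_filter _ hY')⟩

lemma SpreadState.le_card (P : Parameters (Fintype.card ι) C N B) (hμ : 0 ≤ μ)
    (hH : IsAdversary Sol Q H) (hgd : SqNormLE (signMatrix gd) (2 * N ^ 2 / B ^ 32)) (hκ : 0 < κ)
    (s : SpreadState μ gd H (B / N) κ I J z X Y) {r : R}
    (hr : ∀ x ∈ X, ∀ y ∈ Y, Sol (fun j => gd (x j) (y j)) r) : Q ≤ (I ∪ J).card := by
  by_contra! hlt
  have hω := P.strong_rate_pos
  have hY0 := s.mass_right_pos hω hκ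
  obtain ⟨w, hw, not_sol⟩ := hH.refute _ z s.adversary (by rwa [compl_compl]) r
  obtain ⟨X₁, hX₁, hmass₁, unbiased⟩ := exists_unbiased_subset P hμ hgd
    (s.spread_left.mono_rate hμ hω.le P.strong_rate_le)
    (s.spread_right.mono_rate hμ hω.le P.strong_rate_le) hY0
  obtain ⟨x, hx⟩ := nonempty_of_mass_pos (hmass₁.trans_lt' (half_pos (s.mass_left_pos hω hκ)))
  obtain ⟨y, hy⟩ := nonempty_of_mass_pos
    ((le_mass_gadgetEvent P hμ subset_rfl (unbiased x hx) w).trans_lt' (by positivity))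
  obtain ⟨hyY, hyw⟩ := mem_gadgetEvent.mp hy
  have realized : (fun j => gd (x j) (y j)) = w := by
    funext j
    by_cases hj : j ∈ I ∪ J
    · rw [s.gadget_eq x (hX₁ hx) y hyY j hj, hw j (by simpa only [Finset.mem_compl, not_not])]
    · exact hyw j (Finset.mem_compl.mpr hj)
  exact not_sol (realized ▸ hr x (hX₁ hx) y hyY)

lemma SimulationState.mul_pow_le_one (hN : 0 < N) (hμ : 0 ≤ μ)
    (hcap : ∀ J w, mass μ (cylinder Finset.univ J w) ≤ (4 / N) ^ J.card)
    (s : SimulationState μ gd H (B / N) κ I J z X Y) :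
    κ * ((B / 8) ^ I.card * (1 / 4) ^ J.card) ≤ 1 := by
  obtain ⟨u, hu⟩ := s.fixed_left
  have X_subset : X ⊆ cylinder Finset.univ I (I.restrict u) := fun x hx =>
    mem_cylinder_restrict.mpr ⟨Finset.mem_univ x, hu x hx⟩
  refine le_of_mul_le_mul_left ?_ (show 0 < (4 / N) ^ I.card by positivity)
  calc (4 / N) ^ I.card * (κ * ((B / 8) ^ I.card * (1 / 4) ^ J.card))
      = κ * ((4 / N * (B / 8)) ^ I.card * (1 / 4) ^ J.card) := by rw [mul_pow]; ring
    _ = κ * ((B / N / 2) ^ I.card * (1 / 4) ^ J.card) := by congr 3; ring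
    _ ≤ mass μ X := s.le_mass_left
    _ ≤ mass μ (cylinder Finset.univ I (I.restrict u)) := mass_mono hμ X_subset
    _ ≤ (4 / N) ^ I.card * 1 := (hcap I _).trans_eq (mul_one _).symm

lemma SimulationState.sq_mul_pow_card_le_one (hN : 0 < N) (hB : 0 < B) (hκ : 0 < κ) (hμ : 0 ≤ μ)
    (hcap : ∀ J w, mass μ (cylinder Finset.univ J w) ≤ (4 / N) ^ J.card)
    (s : SimulationState μ gd H (B / N) κ I J z X Y) :
    κ ^ 2 * (B / 32) ^ (I ∪ J).card ≤ 1 := by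
  have left := s.mul_pow_le_one hN hμ hcap
  have right := s.swap.mul_pow_le_one hN hμ hcap
  calc κ ^ 2 * (B / 32) ^ (I ∪ J).card = κ ^ 2 * (B / 8 * (1 / 4)) ^ (I ∪ J).card := by
        congr 2; ring
    _ = (κ * ((B / 8) ^ I.card * (1 / 4) ^ J.card)) *
        (κ * ((B / 8) ^ J.card * (1 / 4) ^ I.card)) := by
        rw [Finset.card_union_of_disjoint s.disjoint, pow_add, mul_pow, mul_pow]; ring
    _ ≤ 1 := mul_le_one₀ left (by positivity) right

lemma sixteen_sq_mul_pow_le {k L : ℕ} (h : 3 * k ≤ 2 * L) : 16 ^ 2 * (k : ℝ) ^ 14 ≤ L ^ 14 := by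
  have hk : (k : ℝ) ≤ 2 / 3 * L := by
    have : (3 : ℝ) * k ≤ 2 * L := by exact_mod_cast h
    linarith
  calc 16 ^ 2 * (k : ℝ) ^ 14 ≤ 16 ^ 2 * (2 / 3 * L) ^ 14 := by gcongr
    _ = 16 ^ 2 * (2 / 3) ^ 14 * (L : ℝ) ^ 14 := by ring
    _ ≤ L ^ 14 := mul_le_of_le_one_left (by positivity) (by norm_num)

/-- The exponent `14` makes the loss of a factor `16` in `κ` affordable: one balanced split of the
protocol shrinks its number of leaves by a factor `2 / 3`, and `16 ^ 2 * (2 / 3) ^ 14 ≤ 1`. -/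
theorem SpreadState.le_leaves_pow (P : Parameters (Fintype.card ι) C N B) (hμ : 0 ≤ μ)
    (hcap : ∀ J w, mass μ (cylinder Finset.univ J w) ≤ (4 / N) ^ J.card)
    (hH : IsAdversary Sol Q H) (hgd : SqNormLE (signMatrix gd) (2 * N ^ 2 / B ^ 32)) (hκ : 0 < κ)
    (s : SpreadState μ gd H (B / N) κ I J z X Y) (p : Protocol (ι → Λ) (ι → Λ) R)
    (hp : ∀ x ∈ X, ∀ y ∈ Y, Sol (fun j => gd (x j) (y j)) (p.run x y)) :
    κ ^ 2 * (B / 32) ^ Q ≤ (p.leaves : ℝ) ^ 14 := by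
  induction hL : p.leaves using Nat.strong_induction_on generalizing p κ I J z X Y with
  | _ L ih =>
    rcases le_or_gt L 1 with hL1 | hL2
    · obtain ⟨r, rfl⟩ := p.eq_leaf_of_leaves_le_one (hL.trans_le hL1)
      have one_le : 1 ≤ B / 32 := by linarith [P.le_B]
      calc κ ^ 2 * (B / 32) ^ Q ≤ κ ^ 2 * (B / 32) ^ (I ∪ J).card := by
            gcongr
            exact s.le_card P hμ hH hgd hκ hp
        _ ≤ 1 := s.sq_mul_pow_card_le_one P.N_pos P.B_pos hκ hμ hcap
        _ ≤ (L : ℝ) ^ 14 := one_le_pow₀ (by exact_mod_cast hL ▸ Protocol.one_le_leaves _)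
    · obtain ⟨α, β, q, r, hrun, hq_large, hq_small, hqr⟩ :=
        Protocol.hasSplit (T := 2 * L / 3) (by lia) p (by lia)
      obtain ⟨a, b, I', J', z', X', hX', Y', hY', s'⟩ := s.bits P hμ hH hgd hκ α β
      obtain ⟨p', hsize, hrun'⟩ : ∃ p' : Protocol (ι → Λ) (ι → Λ) R, 3 * p'.leaves ≤ 2 * L ∧
          ∀ x y, α x = a → β y = b → p.run x y = p'.run x y := by
        by_cases hab : a = true ∧ b = true
        · exact ⟨q, by lia, fun x y hx hy => by rw [hrun, hx, hy, if_pos hab]⟩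
        · exact ⟨r, by lia, fun x y hx hy => by rw [hrun, hx, hy, if_neg hab]⟩
      have smaller_bound : (κ / 16) ^ 2 * (B / 32) ^ Q ≤ (p'.leaves : ℝ) ^ 14 := by
        refine ih _ (by lia) (by positivity) s' p' (fun x hx y hy => ?_) rfl
        obtain ⟨hxX, hxa⟩ := Finset.mem_filter.mp (hX' hx)
        obtain ⟨hyY, hyb⟩ := Finset.mem_filter.mp (hY' hy)
        exact hrun' x y hxa hyb ▸ hp x hxX y hyY
      linarith [sixteen_sq_mul_pow_le hsize]

end Simulation

/-! ### The decision-tree adversary -/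

section Adversary

variable {α β O : Type} [Fintype α] [Fintype β] [DecidableEq α] [DecidableEq β]
  {S : (β → Bool) → O → Prop} {Q : ℕ} {F : Finset (α × β)} {z : α × β → Bool}

/-- No decision tree within the remaining budget of queries solves `S` on a row of the input whose
bits outside `F` are those of `z`. -/
def ResistsTrees (S : (β → Bool) → O → Prop) (Q : ℕ) (F : Finset (α × β))
    (z : α × β → Bool) : Prop :=
  ∀ (i : α) (T : DTree β O), T.depth + Fᶜ.card < Q →
    ∃ w : β → Bool, (∀ l, (i, l) ∉ F → w l = z (i, l)) ∧ ¬ S w (T.run w)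

lemma resistsTrees_univ (S : (β → Bool) → O → Prop) (z : α × β → Bool) :
    ResistsTrees S (Qcomplexity S) Finset.univ z := by
  intro i T hT
  by_contra! hT_solves
  have : Qcomplexity S ≤ T.depth :=
    Nat.sInf_le ⟨T, fun w => hT_solves w fun l hl => absurd (Finset.mem_univ (i, l)) hl, rfl⟩
  lia

lemma ResistsTrees.exists_solving_tree (h : ResistsTrees S Q F z) {i : α} {l : β}
    (hil : (i, l) ∈ F) {b : Bool}
    (hb : ¬ ResistsTrees S Q (F.erase (i, l)) (Function.update z (i, l) b)) :
    ∃ T : DTree β O, T.depth + 1 + Fᶜ.card < Q ∧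
      ∀ w : β → Bool, (∀ k, (i, k) ∉ F → w k = z (i, k)) → w l = b → S w (T.run w) := by
  simp only [ResistsTrees, not_forall, not_exists, not_and, not_not, exists_prop,
    Finset.compl_erase, Finset.card_insert_of_notMem (Finset.notMem_compl.mpr hil)] at hb
  obtain ⟨i', T, hT, hsolves⟩ := hb
  have update_eq {w : β → Bool} (hw : ∀ k, (i', k) ∉ F → w k = z (i', k))
      (hwl : i' = i → w l = b) (k : β) (hk : (i', k) ∉ F.erase (i, l)) :
      w k = Function.update z (i, l) b (i', k) := by
    by_cases heq : (i', k) = (i, l)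
    · obtain ⟨rfl, rfl⟩ := Prod.mk.inj heq
      rw [Function.update_self, hwl rfl]
    · rw [Function.update_of_ne heq]
      exact hw k fun hkF => hk (Finset.mem_erase.mpr ⟨heq, hkF⟩)
  by_cases hi : i' = i
  · subst hi
    exact ⟨T, by lia, fun w hw hwl => hsolves w (update_eq hw fun _ => hwl)⟩
  · obtain ⟨w, hw, hSw⟩ := h i' T (by lia)
    exact absurd (hsolves w (update_eq hw fun hi' => absurd hi' hi)) hSw

lemma ResistsTrees.exists_update (h : ResistsTrees S Q F z) {j : α × β} (hj : j ∈ F) :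
    ∃ b, ResistsTrees S Q (F.erase j) (Function.update z j b) := by
  by_contra! hcontra
  obtain ⟨T₀, hT₀, solves₀⟩ := h.exists_solving_tree hj (hcontra false)
  obtain ⟨T₁, hT₁, solves₁⟩ := h.exists_solving_tree hj (hcontra true)
  obtain ⟨w, hw, hSw⟩ := h j.1 (.node j.2 T₀ T₁) (by simp only [DTree.depth]; lia)
  refine hSw ?_
  rcases Bool.eq_false_or_eq_true (w j.2) with hwj | hwj
  · simpa only [DTree.run, hwj, if_true] using solves₁ w hw hwj
  · simpa only [DTree.run, hwj, Bool.false_eq_true, if_false] using solves₀ w hw hwj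

lemma ResistsTrees.answer (h : ResistsTrees S Q F z) {K : Finset (α × β)} (hK : K ⊆ F) :
    ∃ z', (∀ j ∉ K, z' j = z j) ∧ ResistsTrees S Q (F \ K) z' := by
  induction K using Finset.induction_on with
  | empty => exact ⟨z, fun _ _ => rfl, by rwa [Finset.sdiff_empty]⟩
  | insert j K hj ih =>
    obtain ⟨z', hz', h'⟩ := ih ((Finset.subset_insert _ _).trans hK)
    obtain ⟨b, hb⟩ :=
      h'.exists_update (Finset.mem_sdiff.mpr ⟨hK (Finset.mem_insert_self _ _), hj⟩)
    refine ⟨Function.update z' j b, fun k hk => ?_, by rwa [Finset.sdiff_insert]⟩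
    rw [Finset.mem_insert, not_or] at hk
    rw [Function.update_of_ne hk.1, hz' k hk.2]

lemma ResistsTrees.refute (h : ResistsTrees S Q F z) (hcard : Fᶜ.card < Q) (i : α) (o : O) :
    ∃ w : α × β → Bool, (∀ j ∉ F, w j = z j) ∧ ¬ S (fun l => w (i, l)) o := by
  obtain ⟨w, hw, hSw⟩ := h i (.leaf o) (by rwa [DTree.depth, zero_add])
  refine ⟨fun j => if j.1 = i then w j.2 else z j, ?_, ?_⟩
  · rintro ⟨i', l⟩ hj
    by_cases hi : i' = i
    · subst hi
      simpa only [if_true] using hw l hj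
    · simp only [hi, if_false]
  · simpa only [if_true, DTree.run] using hSw

lemma isAdversary_resistsTrees (S : (β → Bool) → O → Prop) (Q : ℕ) :
    IsAdversary (fun w (r : α × O) => S (fun l => w (r.1, l)) r.2) Q (ResistsTrees S Q) where
  answer _ _ h _ hK := h.answer hK
  refute _ _ h hcard r := h.refute hcard r.1 r.2

end Adversary

/-! ### Monotone formula complexity of rectangles -/

section MonotoneComplexity

variable {ι : Type} {A B : Set (ι → Bool)}

lemma mL_le_leaves {p : Protocol A B ι} (hp : Solves p (mKWrect A B)) : mL A B ≤ p.leaves :=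
  Nat.sInf_le ⟨p, hp, rfl⟩

lemma mL_le_one_of_solves_leaf
    (h : ∀ p : Protocol A B ι, Solves p (mKWrect A B) → ∀ i, Solves (.leaf i) (mKWrect A B)) :
    mL A B ≤ 1 := by
  rcases Set.eq_empty_or_nonempty
    {k | ∃ p : Protocol A B ι, Solves p (mKWrect A B) ∧ p.leaves = k} with hempty | ⟨-, p, hp, -⟩
  · rw [mL, Lsize, hempty, Nat.sInf_empty]
    exact Nat.zero_le 1
  · obtain ⟨π, hπ⟩ : p.fullTranscripts.Nonempty :=
      Finset.card_pos.mp (p.card_fullTranscripts ▸ p.one_le_leaves)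
    obtain ⟨i, -⟩ := p.isFullTranscript_of_mem_fullTranscripts hπ
    exact mL_le_leaves (h p hp i)

lemma mL_le_one [Subsingleton ι] (A B : Set (ι → Bool)) : mL A B ≤ 1 :=
  mL_le_one_of_solves_leaf fun p hp i a b => Subsingleton.elim (p.run a b) i ▸ hp a b

lemma nonempty_left_of_one_lt_mL (h : 1 < mL A B) : A.Nonempty := by
  by_contra! hA
  subst hA
  exact h.not_ge (mL_le_one_of_solves_leaf fun _ _ _ a => a.2.elim)

lemma nonempty_right_of_one_lt_mL (h : 1 < mL A B) : B.Nonempty := by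
  by_contra! hB
  subst hB
  exact h.not_ge (mL_le_one_of_solves_leaf fun _ _ _ _ b => b.2.elim)

variable [Finite ι] [Nonempty ι]

lemma exists_leaves_eq_mL (hAB : ∀ a ∈ A, ∀ b ∈ B, ¬ a ≤ b) :
    ∃ p : Protocol A B ι, Solves p (mKWrect A B) ∧ p.leaves = mL A B := by
  obtain ⟨p, hp⟩ := Protocol.exists_solves (R := mKWrect A B) fun a b => by
    obtain ⟨i, hi⟩ := not_forall.mp (hAB a a.2 b b.2)
    exact ⟨i, (Bool.lt_iff.mp (not_le.mp hi)).symm⟩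
  exact Nat.sInf_mem (s := {k | ∃ p : Protocol A B ι, Solves p (mKWrect A B) ∧ p.leaves = k})
    ⟨p.leaves, p, hp, rfl⟩

/-- The players first announce `a i` and, if it is `1`, then `b i`; in the remaining case
`a i > b i` they are done. -/
lemma mL_le_add_add_one (hAB : ∀ a ∈ A, ∀ b ∈ B, ¬ a ≤ b) (i : ι) :
    mL A B ≤ mL {a ∈ A | a i = false} B + mL A {b ∈ B | b i = true} + 1 := by
  obtain ⟨p₀, hp₀, leaves₀⟩ := exists_leaves_eq_mL (A := {a ∈ A | a i = false}) (B := B)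
    fun a ha => hAB a ha.1
  obtain ⟨p₁, hp₁, leaves₁⟩ := exists_leaves_eq_mL (A := A) (B := {b ∈ B | b i = true})
    fun a ha b hb => hAB a ha b hb.1
  let e₀ (a : A) : Option ({a ∈ A | a i = false} : Set (ι → Bool)) :=
    if h : a.1 i = false then some ⟨a.1, a.2, h⟩ else none
  let e₁ (b : B) : Option ({b ∈ B | b i = true} : Set (ι → Bool)) :=
    if h : b.1 i = true then some ⟨b.1, b.2, h⟩ else none
  let p : Protocol A B ι := .nodeA (fun a => a.1 i) (p₀.pullback e₀ some)
    (.nodeB (fun b => b.1 i) (.leaf i) (p₁.pullback some e₁))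
  have hp : Solves p (mKWrect A B) := by
    intro a b
    rcases Bool.eq_false_or_eq_true (a.1 i) with ha | ha
    · rcases Bool.eq_false_or_eq_true (b.1 i) with hb | hb
      · have : p.run a b = p₁.run a ⟨b.1, b.2, hb⟩ := by
          simp only [p, Protocol.run, ha, hb, if_true]
          exact Protocol.run_pullback p₁ rfl (dif_pos hb)
        exact this ▸ hp₁ a ⟨b.1, b.2, hb⟩
      · have : p.run a b = i := by
          simp only [p, Protocol.run, ha, hb, if_true, Bool.false_eq_true, if_false]
        exact this.symm ▸ ⟨ha, hb⟩
    · have : p.run a b = p₀.run ⟨a.1, a.2, ha⟩ b := by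
        simp only [p, Protocol.run, ha, Bool.false_eq_true, if_false]
        exact Protocol.run_pullback p₀ (dif_pos ha) rfl
      exact this ▸ hp₀ ⟨a.1, a.2, ha⟩ b
  have := mL_le_leaves hp
  simp only [p, Protocol.leaves, Protocol.leaves_pullback, leaves₀, leaves₁] at this
  lia

end MonotoneComplexity

/-! ### Revealing rows -/

section Reveal

variable {ι Λ : Type*} [DecidableEq ι]

lemma piecewise_eq_piecewise_union {J K : Finset ι} {u x : ι → Λ} (w : ι → Λ)
    (hx : ∀ i ∈ K, x i = u i) :
    J.piecewise w x = (J ∪ K).piecewise (J.piecewise w u) x := by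
  funext i
  by_cases hiJ : i ∈ J
  · simp only [hiJ, Finset.piecewise_eq_of_mem, Finset.mem_union, true_or]
  · by_cases hiK : i ∈ K
    · simp only [hiJ, hiK, Finset.piecewise_eq_of_mem, Finset.piecewise_eq_of_notMem,
        Finset.mem_union, or_true, not_false_eq_true, hx i hiK]
    · simp only [hiJ, hiK, Finset.piecewise_eq_of_notMem, Finset.mem_union, or_self,
        not_false_eq_true]

variable [Fintype ι] [Fintype Λ] {g : (ι → Λ) → ℝ} {J : Finset ι}

lemma card_pow_mul_mass_cylinder (hg : ∀ x y, (∀ i ∉ J, x i = y i) → g x = g y) (w : J → Λ) :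
    (Fintype.card Λ : ℝ) ^ J.card * mass g (cylinder Finset.univ J w) = mass g Finset.univ := by
  let glue (v : J → Λ) (x : ι → Λ) (i : ι) : Λ := if h : i ∈ J then v ⟨i, h⟩ else x i
  have glue_mem (v : J → Λ) (x : ι → Λ) : glue v x ∈ cylinder Finset.univ J v :=
    mem_cylinder.mpr ⟨Finset.mem_univ _, funext fun j => dif_pos j.2⟩
  have glue_of_notMem (v : J → Λ) (x : ι → Λ) (i : ι) (hi : i ∉ J) : glue v x i = x i := dif_neg hi
  have glue_glue (v v' : J → Λ) (x) (hx : x ∈ cylinder Finset.univ J v) :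
      glue v (glue v' x) = x := by
    rw [mem_cylinder] at hx
    funext i
    by_cases hi : i ∈ J
    · exact (dif_pos hi).trans (congrFun hx.2 ⟨i, hi⟩).symm
    · exact (glue_of_notMem v _ i hi).trans (glue_of_notMem v' x i hi)
  have mass_eq (v : J → Λ) :
      mass g (cylinder Finset.univ J v) = mass g (cylinder Finset.univ J w) :=
    Finset.sum_nbij' (glue w) (glue v) (fun x _ => glue_mem w x) (fun x _ => glue_mem v x)
      (glue_glue v w) (glue_glue w v) fun x _ =>
        hg x (glue w x) fun i hi => (glue_of_notMem w x i hi).symm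
  rw [← sum_mass_cylinder g Finset.univ J, Finset.sum_congr rfl fun v _ => mass_eq v,
    Finset.sum_const, Finset.card_univ, Fintype.card_fun, Fintype.card_coe, nsmul_eq_mul,
    Nat.cast_pow]

variable {α : Type*}

lemma exists_isMax_revealed [Finite α] [Nonempty Λ] (row : ι → α)
    (G : (α → Option Bool) → (ι → Λ) → ℝ) :
    ∃ σ, ∃ J : Finset ι, ∃ w, (∀ j ∈ J, σ (row j) ≠ none) ∧
      ∀ σ', ∀ J' : Finset ι, ∀ w', (∀ j ∈ J', σ' (row j) ≠ none) →
        ∑ x, G σ' (J'.piecewise w' x) ≤ ∑ x, G σ (J.piecewise w x) := by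
  let admissible : Set ((α → Option Bool) × Finset ι × (ι → Λ)) :=
    {p | ∀ j ∈ p.2.1, p.1 (row j) ≠ none}
  have nonempty : admissible.Nonempty :=
    ⟨(fun _ => none, ∅, Classical.arbitrary _), fun j hj => absurd hj (Finset.notMem_empty j)⟩
  obtain ⟨⟨σ, J, w⟩, hadm, hmax⟩ := Set.exists_max_image admissible
    (fun p => ∑ x, G p.1 (p.2.1.piecewise p.2.2 x)) (Set.toFinite _) nonempty
  exact ⟨σ, J, w, hadm, fun σ' J' w' h => hmax (σ', J', w') h⟩

variable [DecidableEq α] {row : ι → α} {G : (α → Option Bool) → (ι → Λ) → ℝ}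

/-- The sum over the values of a bit is at least the value with that bit unrevealed. Here `σ`
records the bits of the rows that have been revealed. -/
def IsRevealSubadditive (G : (α → Option Bool) → (ι → Λ) → ℝ) : Prop :=
  ∀ σ i x, σ i = none →
    G σ x ≤ G (Function.update σ i (some false)) x + G (Function.update σ i (some true)) x

/-- Fixing an entry in a row that has not been revealed is paid for by revealing that row, which
costs a factor of two. -/
lemma sum_piecewise_le_two_pow_mul {Φ : ℝ} (hΦ : 0 ≤ Φ)
    (hG : IsRevealSubadditive G)
    (hmax : ∀ σ, ∀ J : Finset ι, ∀ w, (∀ j ∈ J, σ (row j) ≠ none) → ∑ x, G σ (J.piecewise w x) ≤ Φ)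
    {σ : α → Option Bool} {K : Finset ι} (w : ι → Λ)
    (hJ : ∀ j ∈ J, σ (row j) ≠ none ∨ j ∈ K) :
    ∑ x, G σ (J.piecewise w x) ≤ 2 ^ K.card * Φ := by
  induction K using Finset.induction_on generalizing σ with
  | empty =>
    rw [Finset.card_empty, pow_zero, one_mul]
    exact hmax σ J w fun j hj => (hJ j hj).resolve_right (Finset.notMem_empty j)
  | insert k K hk ih =>
    rw [Finset.card_insert_of_notMem hk, pow_succ]
    by_cases hσ : σ (row k) = none
    · have reveal (b : Bool) :
          ∑ x, G (Function.update σ (row k) (some b)) (J.piecewise w x) ≤ 2 ^ K.card * Φ := by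
        refine ih fun j hj => ?_
        by_cases hjk : row j = row k
        · exact Or.inl (by simp only [hjk, Function.update_self, ne_eq, reduceCtorEq,
            not_false_eq_true])
        · rw [Function.update_of_ne hjk]
          exact (hJ j hj).imp_right fun h =>
            (Finset.mem_insert.mp h).resolve_left fun h => hjk (congrArg row h)
      calc ∑ x, G σ (J.piecewise w x)
          ≤ ∑ x, (G (Function.update σ (row k) (some false)) (J.piecewise w x) +
              G (Function.update σ (row k) (some true)) (J.piecewise w x)) :=
            Finset.sum_le_sum fun x _ => hG σ _ _ hσ
        _ ≤ 2 ^ K.card * Φ + 2 ^ K.card * Φ := by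
            rw [Finset.sum_add_distrib]
            exact add_le_add (reveal false) (reveal true)
        _ = 2 ^ K.card * 2 * Φ := by ring
    · have hJ' (j) (hj : j ∈ J) : σ (row j) ≠ none ∨ j ∈ K := by
        rcases hJ j hj with h | h
        · exact Or.inl h
        · exact (Finset.mem_insert.mp h).imp_left fun h : j = k => h ▸ hσ
      calc ∑ x, G σ (J.piecewise w x) ≤ 2 ^ K.card * Φ := ih hJ'
        _ ≤ 2 ^ K.card * 2 * Φ := by gcongr; linarith [pow_pos (two_pos (α := ℝ)) K.card]

lemma exists_revealed_mass_cylinder_le [Finite α] [Nonempty Λ] (row : ι → α)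
    (hG₀ : ∀ σ x, 0 ≤ G σ x) (hG : IsRevealSubadditive G) :
    ∃ σ, ∃ J : Finset ι, ∃ w, (∀ j ∈ J, σ (row j) ≠ none) ∧
      ∑ x, G (fun _ => none) x ≤ mass (fun x => G σ (J.piecewise w x)) Finset.univ ∧
      ∀ K v, (Fintype.card Λ : ℝ) ^ K.card *
          mass (fun x => G σ (J.piecewise w x)) (cylinder Finset.univ K v) ≤
        2 ^ K.card * mass (fun x => G σ (J.piecewise w x)) Finset.univ := by
  obtain ⟨σ, J, w, hadm, hmax⟩ := exists_isMax_revealed row G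
  refine ⟨σ, J, w, hadm, ?_, fun K v => ?_⟩
  · simpa only [mass, Finset.piecewise_empty] using hmax (fun _ => none) ∅ w fun j hj =>
      absurd hj (Finset.notMem_empty j)
  · obtain ⟨u, rfl⟩ : ∃ u : ι → Λ, K.restrict u = v :=
      ⟨fun i => if h : i ∈ K then v ⟨i, h⟩ else w i, funext fun j => dif_pos j.2⟩
    have mass_eq : mass (fun x => G σ (J.piecewise w x)) (cylinder Finset.univ K (K.restrict u)) =
        mass (fun x => G σ ((J ∪ K).piecewise (J.piecewise w u) x))
          (cylinder Finset.univ K (K.restrict u)) :=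
      Finset.sum_congr rfl fun x hx =>
        congrArg (G σ) (piecewise_eq_piecewise_union w (mem_cylinder_restrict.mp hx).2)
    rw [mass_eq, card_pow_mul_mass_cylinder]
    · exact sum_piecewise_le_two_pow_mul (Finset.sum_nonneg fun x _ => hG₀ _ _) hG hmax _
        fun j hj => (Finset.mem_union.mp hj).imp_left (hadm j)
    · intro x y hxy
      congr 1
      exact Finset.piecewise_congr _ (fun _ _ => rfl)
        fun i hi => hxy i fun h => hi (Finset.mem_union_right _ h)

lemma mass_le_two_mul_mass_indicator {h : (ι → Λ) → ℝ}
    (hbig : 4 * (Fintype.card (ι → Λ) : ℝ) ≤ mass h Finset.univ) :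
    mass h Finset.univ ≤ 2 * mass ({x | 2 < h x}.indicator h) Finset.univ := by
  have le_add_two (x) : h x ≤ {x | 2 < h x}.indicator h x + 2 := by
    by_cases hx : 2 < h x
    · rw [Set.indicator_of_mem (s := {x | 2 < h x}) hx]; linarith
    · rw [Set.indicator_of_notMem (s := {x | 2 < h x}) hx]; linarith
  have := Finset.sum_le_sum fun x (_ : x ∈ Finset.univ) => le_add_two x
  rw [Finset.sum_add_distrib, Finset.sum_const, Finset.card_univ, nsmul_eq_mul] at this
  simp only [mass] at hbig ⊢
  linarith

lemma exists_distribution_of_two_lt [Nonempty Λ] {h : (ι → Λ) → ℝ} (h₀ : 0 ≤ h)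
    (hbig : 4 * (Fintype.card (ι → Λ) : ℝ) ≤ mass h Finset.univ)
    (hcyl : ∀ K w, (Fintype.card Λ : ℝ) ^ K.card * mass h (cylinder Finset.univ K w) ≤
      2 ^ K.card * mass h Finset.univ) :
    ∃ μ : (ι → Λ) → ℝ, 0 ≤ μ ∧ mass μ Finset.univ = 1 ∧
      (∀ K w, mass μ (cylinder Finset.univ K w) ≤ (4 / Fintype.card Λ) ^ K.card) ∧
      ∀ x, μ x ≠ 0 → 2 < h x := by
  let g : (ι → Λ) → ℝ := {x | 2 < h x}.indicator h
  have mass_le_two_mul : mass h Finset.univ ≤ 2 * mass g Finset.univ :=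
    mass_le_two_mul_mass_indicator hbig
  have card_pos : (0 : ℝ) < Fintype.card (ι → Λ) := Nat.cast_pos.mpr Fintype.card_pos
  have mass_pos : 0 < mass g Finset.univ := by linarith
  have mass_div (X : Finset (ι → Λ)) :
      mass (fun x => g x / mass g Finset.univ) X = mass g X / mass g Finset.univ :=
    (Finset.sum_div _ _ _).symm
  have mass_univ : mass (fun x => g x / mass g Finset.univ) Finset.univ = 1 := by
    rw [mass_div, div_self mass_pos.ne']
  refine ⟨fun x => g x / mass g Finset.univ,
    fun x => div_nonneg (Set.indicator_nonneg (fun x _ => h₀ x) x) mass_pos.le,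
    mass_univ, fun K w => ?_, fun x hx =>
      Set.mem_of_indicator_ne_zero (s := {x | 2 < h x}) (div_ne_zero_iff.mp hx).1⟩
  rcases K.eq_empty_or_nonempty with rfl | hK
  · rw [cylinder_empty, mass_univ, Finset.card_empty, pow_zero]
  · have two_le : (2 : ℝ) ≤ 2 ^ K.card := le_self_pow₀ one_le_two hK.card_pos.ne'
    rw [mass_div, div_le_iff₀ mass_pos, div_pow, div_mul_eq_mul_div,
      le_div_iff₀ (pow_pos (Nat.cast_pos.mpr Fintype.card_pos) _), mul_comm]
    calc (Fintype.card Λ : ℝ) ^ K.card * mass g (cylinder Finset.univ K w)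
        ≤ Fintype.card Λ ^ K.card * mass h (cylinder Finset.univ K w) := by
          gcongr
          exact Finset.sum_le_sum fun x _ => Set.indicator_le_self' (fun x _ => h₀ x) x
      _ ≤ 2 ^ K.card * mass h Finset.univ := hcyl K w
      _ ≤ 2 ^ K.card * (2 ^ K.card * mass g Finset.univ) := by
          gcongr; exact mass_le_two_mul.trans (by gcongr)
      _ = 4 ^ K.card * mass g Finset.univ := by
          rw [← mul_assoc, ← mul_pow]; norm_num

end Reveal

/-! ### The hard distribution of a live transcript -/

section Consistent

variable {α : Type*} {A : Set (α → Bool)} {σ : α → Option Bool} {i : α} {b : Bool}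

/-- The vectors of `A` having bit `b` in every coordinate revealed as `b` by `σ`. It is used with
`b = 0` on Alice's side and `b = 1` on Bob's side, so that no revealed coordinate `i` satisfies
`a i > b i`. -/
def consistent (b : Bool) (A : Set (α → Bool)) (σ : α → Option Bool) : Set (α → Bool) :=
  {a ∈ A | ∀ i, σ i = some b → a i = b}

lemma consistent_unrevealed : consistent b A (fun _ => none) = A := by
  simp only [consistent, reduceCtorEq, false_implies, implies_true, and_true, Set.ofPred_mem_eq]

variable [DecidableEq α]

lemma consistent_update_same (hi : σ i = none) :
    consistent b A (Function.update σ i (some b)) = {a ∈ consistent b A σ | a i = b} := by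
  ext a
  simp only [consistent, Set.mem_ofPred_eq, and_assoc]
  refine and_congr_right fun _ => ⟨fun h => ⟨fun k hk => ?_, h i (Function.update_self ..)⟩, ?_⟩
  · exact h k (by rwa [Function.update_of_ne (by rintro rfl; simp [hi] at hk)])
  · rintro ⟨h, hai⟩ k hk
    by_cases hki : k = i
    · exact hki ▸ hai
    · exact h k (by rwa [Function.update_of_ne hki] at hk)

lemma consistent_update_not (hi : σ i = none) :
    consistent b A (Function.update σ i (some !b)) = consistent b A σ := by
  ext a
  refine and_congr_right fun _ => forall_congr' fun k => ?_
  by_cases hki : k = i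
  · simp only [hki, Function.update_self, hi, Option.some.injEq, Bool.not_eq_self, reduceCtorEq]
  · rw [Function.update_of_ne hki]

end Consistent

section HardDistribution

variable {m ℓ : ℕ} {Λ O : Type} {f : (Fin m → Bool) → Bool}
  {Pr : Protocol ((Fin m → Fin ℓ → Λ) × {a : Fin m → Bool // f a = true})
    ((Fin m → Fin ℓ → Λ) × {b : Fin m → Bool // f b = false}) (Fin m × O)}
  {π : List Bool} {σ : Fin m → Option Bool}

/-- `mL(𝒜_{π,x} × ℬ_{π,x})` after restricting both sides to the vectors consistent with the
revealed rows `σ`. -/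
noncomputable def revealedComplexity (f : (Fin m → Bool) → Bool)
    (Pr : Protocol ((Fin m → Fin ℓ → Λ) × {a : Fin m → Bool // f a = true})
      ((Fin m → Fin ℓ → Λ) × {b : Fin m → Bool // f b = false}) (Fin m × O))
    (π : List Bool) (σ : Fin m → Option Bool) (x : Fin m × Fin ℓ → Λ) : ℕ :=
  mL (consistent false (Aset f Pr π (Function.curry x)) σ)
    (consistent true (Bset f Pr π (Function.curry x)) σ)

lemma isRevealSubadditive_revealedComplexity (hf : Monotone f) :
    IsRevealSubadditive fun σ x => (revealedComplexity f Pr π σ x : ℝ) + 1 := by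
  intro σ i x hi
  have : Nonempty (Fin m) := ⟨i⟩
  have not_le (a) (ha : a ∈ consistent false (Aset f Pr π (Function.curry x)) σ)
      (b) (hb : b ∈ consistent true (Bset f Pr π (Function.curry x)) σ) : ¬ a ≤ b := by
    obtain ⟨⟨hfa, -⟩, -⟩ := ha
    obtain ⟨⟨hfb, -⟩, -⟩ := hb
    intro hab
    exact Bool.false_ne_true (hfb.symm.trans (top_le_iff.mp (hfa.symm.le.trans (hf hab))))
  have update_false : revealedComplexity f Pr π (Function.update σ i (some false)) x = _ :=
    congrArg₂ mL (consistent_update_same hi) (consistent_update_not (b := true) hi)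
  have update_true : revealedComplexity f Pr π (Function.update σ i (some true)) x = _ :=
    congrArg₂ mL (consistent_update_not (b := false) hi) (consistent_update_same hi)
  have := mL_le_add_add_one not_le i
  rw [← update_false, ← update_true] at this
  have : (revealedComplexity f Pr π σ x : ℝ) ≤ _ := Nat.cast_le.mpr this
  push_cast at this
  linarith

lemma gammaM_mul_card [Fintype Λ] [DecidableEq Λ] [Nonempty Λ] :
    gammaM f Pr π * Fintype.card (Fin m × Fin ℓ → Λ) =
      ∑ x, (revealedComplexity f Pr π (fun _ => none) x : ℝ) := by
  have card_ne_zero : (Fintype.card (Fin m → Fin ℓ → Λ) : ℝ) ≠ 0 :=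
    Nat.cast_ne_zero.mpr Fintype.card_ne_zero
  rw [gammaM, Fintype.card_congr (Equiv.curry (Fin m) (Fin ℓ) Λ), div_mul_cancel₀ _ card_ne_zero,
    ← (Equiv.curry (Fin m) (Fin ℓ) Λ).sum_comp]
  simp only [revealedComplexity, consistent_unrevealed, Equiv.curry_apply]

lemma gammaM_le_one [Fintype Λ] [DecidableEq Λ] [Subsingleton (Fin m)] : gammaM f Pr π ≤ 1 := by
  refine div_le_one_of_le₀ ?_ (Nat.cast_nonneg _)
  calc ∑ W, (mL (Aset f Pr π W) (Bset f Pr π W) : ℝ)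
      ≤ ∑ _W : Fin m → Fin ℓ → Λ, 1 :=
        Finset.sum_le_sum fun W _ => Nat.cast_le_one.mpr (mL_le_one _ _)
    _ = Fintype.card (Fin m → Fin ℓ → Λ) := by
        rw [Finset.sum_const, Finset.card_univ, nsmul_eq_mul, mul_one]

variable {S : (Fin ℓ → Bool) → O → Prop} {gd : Λ → Λ → Bool}
  {q : Protocol ((Fin m → Fin ℓ → Λ) × {a : Fin m → Bool // f a = true})
    ((Fin m → Fin ℓ → Λ) × {b : Fin m → Bool // f b = false}) (Fin m × O)}

/-- The players complete their matrices with consistent vectors and run `q`; since the output row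
is then unrevealed, the fixed entries do not occur in it. -/
lemma exists_protocol_of_revealed (hPr : Solves Pr (starLift f S gd)) (hq : Pr.subtree π = some q)
    {J : Finset (Fin m × Fin ℓ)} (hJ : ∀ j ∈ J, σ j.1 ≠ none) (w : Fin m × Fin ℓ → Λ) :
    ∃ p : Protocol (Fin m × Fin ℓ → Λ) (Fin m × Fin ℓ → Λ) (Fin m × O), p.leaves = q.leaves ∧
      ∀ x y, 1 < revealedComplexity f Pr π σ (J.piecewise w x) →
        1 < revealedComplexity f Pr π σ (J.piecewise w y) →
          S (fun l => gd (x ((p.run x y).1, l)) (y ((p.run x y).1, l))) (p.run x y).2 := by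
  let W (x : Fin m × Fin ℓ → Λ) : Fin m → Fin ℓ → Λ := Function.curry (J.piecewise w x)
  let e x : Option ((Fin m → Fin ℓ → Λ) × {a : Fin m → Bool // f a = true}) :=
    if h : (consistent false (Aset f Pr π (W x)) σ).Nonempty
      then some (W x, ⟨h.some, h.some_mem.1.1⟩) else none
  let e' y : Option ((Fin m → Fin ℓ → Λ) × {b : Fin m → Bool // f b = false}) :=
    if h : (consistent true (Bset f Pr π (W y)) σ).Nonempty
      then some (W y, ⟨h.some, h.some_mem.1.1⟩) else none
  refine ⟨q.pullback e e', q.leaves_pullback e e', fun x y hx hy => ?_⟩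
  have hA := nonempty_left_of_one_lt_mL hx
  have hB := nonempty_right_of_one_lt_mL hy
  obtain ⟨⟨hfa, follows_a⟩, consistent_a⟩ := hA.some_mem
  obtain ⟨⟨hfb, follows_b⟩, consistent_b⟩ := hB.some_mem
  have run_eq : (q.pullback e e').run x y = Pr.run (W x, ⟨hA.some, hfa⟩) (W y, ⟨hB.some, hfb⟩) :=
    (q.run_pullback (dif_pos hA) (dif_pos hB)).trans (Pr.run_subtree hq follows_a follows_b)
  rw [run_eq]
  obtain ⟨a_eq_true, b_eq_false, hS⟩ := hPr (W x, ⟨hA.some, hfa⟩) (W y, ⟨hB.some, hfb⟩)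
  set i := (Pr.run (W x, ⟨hA.some, hfa⟩) (W y, ⟨hB.some, hfb⟩)).1
  have unrevealed : σ i = none := by
    rcases hσ : σ i with _ | _ | _
    · rfl
    · exact absurd ((consistent_a i hσ).symm.trans a_eq_true) Bool.false_ne_true
    · exact absurd (b_eq_false.symm.trans (consistent_b i hσ)) Bool.false_ne_true
  have W_apply (x l) : W x i l = x (i, l) :=
    Finset.piecewise_eq_of_notMem _ _ _ fun h => hJ _ h unrevealed
  simpa only [liftSP, W_apply] using hS

variable [Fintype Λ] [DecidableEq Λ] [Nonempty Λ]

lemma exists_hard_distribution (hf : Monotone f) (hPr : Solves Pr (starLift f S gd))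
    (hγ : 3 ≤ gammaM f Pr π) (hq : Pr.subtree π = some q) :
    ∃ μ : (Fin m × Fin ℓ → Λ) → ℝ, 0 ≤ μ ∧ mass μ Finset.univ = 1 ∧
      (∀ K w, mass μ (cylinder Finset.univ K w) ≤ (4 / Fintype.card Λ) ^ K.card) ∧
      ∃ p : Protocol (Fin m × Fin ℓ → Λ) (Fin m × Fin ℓ → Λ) (Fin m × O), p.leaves = q.leaves ∧
        ∀ x y, μ x ≠ 0 → μ y ≠ 0 →
          S (fun l => gd (x ((p.run x y).1, l)) (y ((p.run x y).1, l))) (p.run x y).2 := by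
  obtain ⟨σ, J, w, hJ, hsum, hcyl⟩ := exists_revealed_mass_cylinder_le Prod.fst
    (G := fun σ x => (revealedComplexity f Pr π σ x : ℝ) + 1) (fun _ _ => by positivity)
    (isRevealSubadditive_revealedComplexity hf)
  have hbig : 4 * (Fintype.card (Fin m × Fin ℓ → Λ) : ℝ) ≤
      ∑ x, ((revealedComplexity f Pr π (fun _ => none) x : ℝ) + 1) := by
    rw [Finset.sum_add_distrib, ← gammaM_mul_card, Finset.sum_const, Finset.card_univ,
      nsmul_eq_mul, mul_one]
    linarith [mul_le_mul_of_nonneg_right hγ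
      (Nat.cast_nonneg' (α := ℝ) (Fintype.card (Fin m × Fin ℓ → Λ)))]
  obtain ⟨μ, hμ, mass_univ, mass_cylinder_le, two_lt⟩ :=
    exists_distribution_of_two_lt (fun _ => by positivity) (hbig.trans hsum) hcyl
  obtain ⟨p, hleaves, hp⟩ := exists_protocol_of_revealed hPr hq hJ w
  have one_lt (x) (hx : μ x ≠ 0) : 1 < revealedComplexity f Pr π σ (J.piecewise w x) := by
    have := two_lt x hx
    exact_mod_cast (by linarith : (1 : ℝ) < revealedComplexity f Pr π σ (J.piecewise w x))
  exact ⟨μ, hμ, mass_univ, mass_cylinder_le, p, hleaves, fun x y hx hy =>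
    hp x y (one_lt x hx) (one_lt y hy)⟩

lemma pow_Qcomplexity_le_leaves_pow {C : ℕ} {B : ℝ} (hf : Monotone f)
    (hPr : Solves Pr (starLift f S gd)) (hγ : 3 ≤ gammaM f Pr π) (hq : Pr.subtree π = some q)
    (P : Parameters (m * ℓ) C (Fintype.card Λ) B)
    (hgd : SqNormLE (signMatrix gd) (2 * (Fintype.card Λ : ℝ) ^ 2 / B ^ 32)) :
    (B / 32) ^ Qcomplexity S ≤ (q.leaves : ℝ) ^ 14 := by
  obtain ⟨μ, hμ, mass_univ, mass_cylinder_le, p, hleaves, hp⟩ :=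
    exists_hard_distribution hf hPr hγ hq
  let X : Finset (Fin m × Fin ℓ → Λ) := {x | μ x ≠ 0}
  have mass_X : mass μ X = 1 := (Finset.sum_filter_ne_zero _).trans mass_univ
  have spread : IsSpread μ (B / Fintype.card Λ) (∅ ∪ ∅)ᶜ X := by
    intro J _ w
    calc mass μ (cylinder X J w)
        ≤ mass μ (cylinder Finset.univ J w) :=
          mass_mono hμ fun x hx =>
            mem_cylinder.mpr ⟨Finset.mem_univ x, (mem_cylinder.mp hx).2⟩
      _ ≤ (4 / Fintype.card Λ) ^ J.card := mass_cylinder_le J w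
      _ ≤ (B / Fintype.card Λ) ^ J.card * mass μ X := by
          rw [mass_X, mul_one]; gcongr; linarith [P.le_B]
  have state : SpreadState μ gd (ResistsTrees S (Qcomplexity S)) (B / Fintype.card Λ) 1 ∅ ∅
      (fun _ => false) X X :=
    { disjoint := Finset.disjoint_empty_left ∅
      adversary := by
        rw [Finset.union_empty, Finset.compl_empty]
        exact resistsTrees_univ S _
      le_mass_left := by simp only [Finset.card_empty, pow_zero, mul_one, mass_X, le_refl]
      le_mass_right := by simp only [Finset.card_empty, pow_zero, mul_one, mass_X, le_refl]
      fixed_left := ⟨Classical.arbitrary _, fun _ _ i hi => absurd hi (Finset.notMem_empty i)⟩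
      fixed_right := ⟨Classical.arbitrary _, fun _ _ i hi => absurd hi (Finset.notMem_empty i)⟩
      gadget_eq := fun _ _ _ _ j hj => absurd hj (Finset.notMem_empty j)
      spread_left := spread
      spread_right := spread }
  rw [← Fintype.card_fin m, ← Fintype.card_fin ℓ, ← Fintype.card_prod] at P
  have := state.le_leaves_pow P hμ mass_cylinder_le (isAdversary_resistsTrees S _) hgd one_pos p
    fun x hx y hy => hp x y (Finset.mem_filter.mp hx).2 (Finset.mem_filter.mp hy).2
  rwa [one_pow, one_mul, hleaves] at this

end HardDistribution

/-! ### Choice of constants -/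

section Constants

lemma Qcomplexity_eq_zero_of_isEmpty {ι O : Type} [IsEmpty ι] {S : (ι → Bool) → O → Prop}
    (hS : ∀ z, ∃ o, S z o) : Qcomplexity S = 0 := by
  obtain ⟨o, ho⟩ := hS isEmptyElim
  exact Nat.sInf_eq_zero.mpr (Or.inl ⟨.leaf o, fun z => Subsingleton.elim isEmptyElim z ▸ ho, rfl⟩)

lemma two_rpow_neg_le_one_div_pow {ε η s : ℝ} {k : ℕ} (hs : 0 ≤ s) (h : k * ε ≤ η) :
    (2 : ℝ) ^ (-(η * s)) ≤ 1 / ((2 : ℝ) ^ (ε * s)) ^ k := by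
  rw [← Real.rpow_mul_natCast zero_le_two, one_div, ← Real.rpow_neg zero_le_two]
  exact Real.rpow_le_rpow_of_exponent_le one_le_two
    (by linarith [mul_le_mul_of_nonneg_right h hs])

lemma two_rpow_mul_le_of_pow_le_pow {s L : ℝ} {Q : ℕ} (hs : 1024 ≤ (2 : ℝ) ^ s) (hL : 0 ≤ L)
    (h : ((2 : ℝ) ^ s / 32) ^ Q ≤ L ^ 14) : (2 : ℝ) ^ (s / 28 * Q) ≤ L := by
  have sq_half : ((2 : ℝ) ^ (s / 2)) ^ 2 = 2 ^ s := by
    rw [← Real.rpow_mul_natCast zero_le_two]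
    congr 1
    push_cast
    ring
  have half_le : (2 : ℝ) ^ (s / 2) ≤ 2 ^ s / 32 := by
    have : (32 : ℝ) ≤ 2 ^ (s / 2) := le_of_sq_le_sq (by norm_num [sq_half, hs]) (by positivity)
    rw [← sq_half]
    nlinarith
  refine le_of_pow_le_pow_left₀ (n := 14) (by norm_num) hL (le_trans ?_ h)
  calc ((2 : ℝ) ^ (s / 28 * Q)) ^ 14 = ((2 : ℝ) ^ (s / 2)) ^ Q := by
        rw [← Real.rpow_mul_natCast zero_le_two, ← Real.rpow_mul_natCast zero_le_two]
        congr 1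
        push_cast
        ring
    _ ≤ (2 ^ s / 32) ^ Q := by gcongr

end Constants

section Live

variable {m ℓ : ℕ} {Λ O : Type} [Fintype Λ] [DecidableEq Λ] {f : (Fin m → Bool) → Bool}
  {Pr : Protocol ((Fin m → Fin ℓ → Λ) × {a : Fin m → Bool // f a = true})
    ((Fin m → Fin ℓ → Λ) × {b : Fin m → Bool // f b = false}) (Fin m × O)}
  {π : List Bool}

lemma two_le_of_three_le_gammaM (hγ : 3 ≤ gammaM f Pr π) : 2 ≤ m := by
  by_contra! hm
  have : Subsingleton (Fin m) := Fin.subsingleton_iff_le_one.mpr (Nat.lt_succ_iff.mp hm)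
  linarith [gammaM_le_one (f := f) (Pr := Pr) (π := π)]

lemma three_le_gammaM_of_liveT (hone : ∃ x, f x = true) (hzero : ∃ x, f x = false)
    (hlive : LiveT f Pr π) : 3 ≤ gammaM f Pr π := by
  obtain ⟨a, ha⟩ := hone
  obtain ⟨b, hb⟩ := hzero
  have m_ne_zero : m ≠ 0 := by
    rintro rfl
    exact Bool.false_ne_true (hb.symm.trans (Subsingleton.elim a b ▸ ha))
  have one_le : (1 : ℝ) ≤ m ^ 2 :=
    one_le_pow₀ (Nat.one_le_cast.mpr (Nat.one_le_iff_ne_zero.mpr m_ne_zero))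
  linarith [hlive.2]

end Live

end MonotoneLifting

open MonotoneLifting in
theorem many_suffixes_of_live_transcript_general (η : ℝ) (hη : 0 < η) :
    ∃ (c : ℕ) (κ : ℝ), 0 < κ ∧
      ∀ (m ℓ t : ℕ) (O : Type)
        (f : (Fin m → Bool) → Bool) (S : (Fin ℓ → Bool) → O → Prop)
        (gd : (Fin t → Bool) → (Fin t → Bool) → Bool),
        Monotone f →
        (∀ z, ∃ o, S z o) →
        disc gd ≤ (2 : ℝ) ^ (-(η * (t : ℝ))) →
        (c : ℝ) * Real.logb 2 ((m : ℝ) * (ℓ : ℝ)) ≤ (t : ℝ) →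
        ∀ (Pr : Protocol
            ((Fin m → Fin ℓ → (Fin t → Bool)) × {a : Fin m → Bool // f a = true})
            ((Fin m → Fin ℓ → (Fin t → Bool)) × {b : Fin m → Bool // f b = false})
            (Fin m × O)),
          Solves Pr (starLift f S gd) →
          ∀ π₁ : List Bool, Pr.IsTranscript π₁ → 3 ≤ gammaM f Pr π₁ →
            ∃ F : Finset (List Bool),
              (2 : ℝ) ^ (κ * (Qcomplexity S : ℝ) * (t : ℝ)) ≤ (F.card : ℝ) ∧
              ∀ π₂ ∈ F, Protocol.IsFullTranscript Pr (π₁ ++ π₂) := by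
  have hε : 0 < min η 1 / 64 := by positivity
  set ε : ℝ := min η 1 / 64 with ε_eq
  obtain ⟨C, c, parameters⟩ := exists_parameters hε (by linarith [min_le_right η 1])
  refine ⟨c, ε / 28, by positivity, fun m ℓ t O f S gd hf hS hdisc ht Pr hPr π₁ hπ₁ hγ => ?_⟩
  obtain ⟨q, hq⟩ := Option.isSome_iff_exists.mp hπ₁
  refine ⟨q.fullTranscripts, ?_, fun π₂ hπ₂ => ?_⟩
  · rw [q.card_fullTranscripts]
    by_cases hQ : Qcomplexity S = 0
    · simpa only [hQ, Nat.cast_zero, mul_zero, zero_mul, Real.rpow_zero, Nat.one_le_cast]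
        using q.one_le_leaves
    have hℓ : ℓ ≠ 0 := by
      rintro rfl
      exact hQ (Qcomplexity_eq_zero_of_isEmpty hS)
    have two_le_mul : 2 ≤ m * ℓ :=
      (two_le_of_three_le_gammaM hγ).trans (Nat.le_mul_of_pos_right m (Nat.pos_of_ne_zero hℓ))
    have P := parameters (m * ℓ) t two_le_mul (by rwa [Nat.cast_mul])
    have card_eq : (2 : ℝ) ^ t = Fintype.card (Fin t → Bool) := by
      simp only [Fintype.card_pi, Fintype.card_bool, Finset.prod_const, Finset.card_univ,
        Fintype.card_fin, Nat.cast_pow, Nat.cast_ofNat]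
    have hgd := SqNormLE.of_disc_le gd P.B_pos (hdisc.trans
      (two_rpow_neg_le_one_div_pow t.cast_nonneg (by push_cast; linarith [min_le_left η 1])))
    convert two_rpow_mul_le_of_pow_le_pow P.le_B (Nat.cast_nonneg q.leaves)
      (pow_Qcomplexity_le_leaves_pow hf hPr hγ hq (card_eq ▸ P) hgd) using 2
    ring
  · obtain ⟨o, ho⟩ := q.isFullTranscript_of_mem_fullTranscripts hπ₂
    exact ⟨o, (Pr.subtree_append hq π₂).trans ho⟩

/-- For every `η > 0` there exist `c ∈ ℕ` and `κ > 0` such that: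
for every protocol `Pr` solving `mKW_f ⊛ (S ◇ gd)` and every live transcript `π₁`,
there are at least `2^{κ·Q(S)·t}` distinct suffixes `π₂` such that `π₁ ∘ π₂` is a
full transcript (a leaf) of `Pr`. -/
theorem many_suffixes_of_live_transcript (η : ℝ) (hη : 0 < η) :
    ∃ (c : ℕ) (κ : ℝ), 0 < κ ∧
      ∀ (m ℓ t : ℕ) (O : Type)
        (f : (Fin m → Bool) → Bool) (S : (Fin ℓ → Bool) → O → Prop)
        (gd : (Fin t → Bool) → (Fin t → Bool) → Bool),
        Monotone f → (∃ x, f x = true) → (∃ x, f x = false) →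
        (∀ z, ∃ o, S z o) →
        disc gd ≤ (2 : ℝ) ^ (-(η * (t : ℝ))) →
        (c : ℝ) * Real.logb 2 ((m : ℝ) * (ℓ : ℝ)) ≤ (t : ℝ) →
        ∀ (Pr : Protocol
            ((Fin m → Fin ℓ → (Fin t → Bool)) × {a : Fin m → Bool // f a = true})
            ((Fin m → Fin ℓ → (Fin t → Bool)) × {b : Fin m → Bool // f b = false})
            (Fin m × O)),
          Solves Pr (starLift f S gd) →
          ∀ π₁ : List Bool, LiveT f Pr π₁ →
            ∃ F : Finset (List Bool),
              (2 : ℝ) ^ (κ * (Qcomplexity S : ℝ) * (t : ℝ)) ≤ (F.card : ℝ) ∧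
              ∀ π₂ ∈ F, Protocol.IsFullTranscript Pr (π₁ ++ π₂) := by
  obtain ⟨c, κ, hκ, h⟩ := many_suffixes_of_live_transcript_general η hη
  refine ⟨c, κ, hκ, fun m ℓ t O f S gd hf hone hzero hS hdisc ht Pr hPr π₁ hlive => ?_⟩
  exact h m ℓ t O f S gd hf hS hdisc ht Pr hPr π₁ hlive.1
    (MonotoneLifting.three_le_gammaM_of_liveT hone hzero hlive)
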